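/- arXiv:0811.3832 — 13 statements merged into one kernel-verified Lean document; each statement's English description precedes it below -/
import Mathlib

section
/- Let ρ ≥ 1 be an integer. A set A ⊆ ℤ² is a maximal anticode of Manhattan diameter 2ρ if and only if A is a translate of the Lee sphere of radius ρ (i.e., A = {(x,y) ∈ ℤ² : |x−a|+|y−b| ≤ ρ} for some (a,b) ∈ ℤ²) or a translate of the quadricentred Lee sphere of radius ρ (i.e., A = {(x,y) ∈ ℤ² : min(|x−a|+|y−b|, |x−a−1|+|y−b|, |x−a|+|y−b−1|, |x−a−1|+|y−b−1|) ≤ ρ−1} for some (a,b) ∈ ℤ²). -/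
/-- Manhattan distance on ℤ². -/
def mdist (p q : ℤ × ℤ) : ℤ := |q.1 - p.1| + |q.2 - p.2|

/-- `A` is a maximal anticode of Manhattan diameter `r`: every pair of points of `A` is at
Manhattan distance at most `r`, and adding any point outside `A` creates a pair at distance
greater than `r`. -/
def IsMaxAnticode (A : Set (ℤ × ℤ)) (r : ℤ) : Prop :=
  (∀ p ∈ A, ∀ q ∈ A, mdist p q ≤ r) ∧
  ∀ p : ℤ × ℤ, p ∉ A → ∃ q ∈ A, r < mdist p q

lemma abs_add_abs_le_iff (s t r : ℤ) :
    |s| + |t| ≤ r ↔ s + t ≤ r ∧ -r ≤ s + t ∧ s - t ≤ r ∧ -r ≤ s - t := by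
  rcases abs_cases s with ⟨h, _⟩ | ⟨h, _⟩ <;> rcases abs_cases t with ⟨h', _⟩ | ⟨h', _⟩ <;>
    rw [h, h'] <;> omega

/-- A box in the rotated coordinates `x + y`, `x - y`. -/
def rbox (ρ u v : ℤ) : Set (ℤ × ℤ) :=
  {p | u ≤ p.1 + p.2 ∧ p.1 + p.2 ≤ u + 2 * ρ ∧ v ≤ p.1 - p.2 ∧ p.1 - p.2 ≤ v + 2 * ρ}

lemma mdist_le_iff (p q : ℤ × ℤ) (r : ℤ) :
    mdist p q ≤ r ↔ (q.1 + q.2) - (p.1 + p.2) ≤ r ∧ (p.1 + p.2) - (q.1 + q.2) ≤ r ∧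
      (q.1 - q.2) - (p.1 - p.2) ≤ r ∧ (p.1 - p.2) - (q.1 - q.2) ≤ r := by
  unfold mdist
  rw [abs_add_abs_le_iff]
  omega

lemma lee_eq (ρ a b : ℤ) :
    {p : ℤ × ℤ | |p.1 - a| + |p.2 - b| ≤ ρ} = rbox ρ (a + b - ρ) (a - b - ρ) := by
  ext ⟨x, y⟩
  simp only [rbox, Set.mem_setOf_eq, abs_add_abs_le_iff]
  omega

lemma quad_eq (ρ a b : ℤ) :
    {p : ℤ × ℤ |
          min (min (|p.1 - a| + |p.2 - b|) (|p.1 - a - 1| + |p.2 - b|))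
              (min (|p.1 - a| + |p.2 - b - 1|) (|p.1 - a - 1| + |p.2 - b - 1|)) ≤ ρ - 1}
      = rbox ρ (a + b + 1 - ρ) (a - b - ρ) := by
  ext ⟨x, y⟩
  simp only [rbox, Set.mem_setOf_eq, min_le_iff, abs_add_abs_le_iff]
  omega

lemma rbox_max (ρ u v : ℤ) (hρ : 1 ≤ ρ) : IsMaxAnticode (rbox ρ u v) (2 * ρ) := by
  have keyv : ∀ t : ℤ, 0 ≤ t → t ≤ 2 * ρ → ∃ q ∈ rbox ρ u v, q.1 - q.2 = v + t := by
    intro t h1 h2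
    refine ⟨((u + v + t + 1) / 2, (u + v + t + 1) / 2 - v - t), ?_, ?_⟩
    · simp only [rbox, Set.mem_setOf_eq]; omega
    · simp only; omega
  have keyu : ∀ t : ℤ, 0 ≤ t → t ≤ 2 * ρ → ∃ q ∈ rbox ρ u v, q.1 + q.2 = u + t := by
    intro t h1 h2
    refine ⟨((u + v + t + 1) / 2, u + t - (u + v + t + 1) / 2), ?_, ?_⟩
    · simp only [rbox, Set.mem_setOf_eq]; omega
    · simp only; omega
  constructor
  · intro p hp q hq
    simp only [rbox, Set.mem_setOf_eq] at hp hq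
    rw [mdist_le_iff]
    omega
  · intro p hp
    simp only [rbox, Set.mem_setOf_eq] at hp
    have fin : ∀ q : ℤ × ℤ, q ∈ rbox ρ u v → ¬ (mdist p q ≤ 2 * ρ) →
      ∃ q ∈ rbox ρ u v, 2 * ρ < mdist p q := fun q h1 h2 => ⟨q, h1, not_le.mp h2⟩
    obtain ⟨q1, m1, e1⟩ := keyu 0 (by omega) (by omega)
    obtain ⟨q2, m2, e2⟩ := keyu (2 * ρ) (by omega) (by omega)
    obtain ⟨q3, m3, e3⟩ := keyv 0 (by omega) (by omega)
    obtain ⟨q4, m4, e4⟩ := keyv (2 * ρ) (by omega) (by omega)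
    by_contra hc
    have f1 := not_not.mp fun h => hc (fin q1 m1 h)
    have f2 := not_not.mp fun h => hc (fin q2 m2 h)
    have f3 := not_not.mp fun h => hc (fin q3 m3 h)
    have f4 := not_not.mp fun h => hc (fin q4 m4 h)
    rw [mdist_le_iff] at f1 f2 f3 f4
    omega

lemma exists_min (A : Set (ℤ × ℤ)) (f : ℤ × ℤ → ℤ) (p : ℤ × ℤ) (hp : p ∈ A) (r : ℤ)
    (h : ∀ q ∈ A, f p - f q ≤ r) : ∃ m ∈ A, ∀ q ∈ A, f m ≤ f q := by
  obtain ⟨z, ⟨m, hm, rfl⟩, hz⟩ := Int.exists_least_of_bdd (P := fun z => ∃ q ∈ A, f q = z)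
    ⟨f p - r, by rintro z ⟨q, hq, rfl⟩; have := h q hq; omega⟩ ⟨f p, p, hp, rfl⟩
  exact ⟨m, hm, fun q hq => hz _ ⟨q, hq, rfl⟩⟩

lemma max_eq_rbox (ρ : ℤ) (A : Set (ℤ × ℤ)) (h : IsMaxAnticode A (2 * ρ)) :
    ∃ u v, A = rbox ρ u v := by
  obtain ⟨h1, h2⟩ := h
  have hne : ∃ p, p ∈ A := by
    by_contra hc
    push Not at hc
    obtain ⟨q, hq, _⟩ := h2 (0, 0) (hc _)
    exact hc q hq
  obtain ⟨p, hp⟩ := hne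
  obtain ⟨m, hm, hm'⟩ := exists_min A (fun q => q.1 + q.2) p hp (2 * ρ)
    fun q hq => ((mdist_le_iff _ _ _).mp (h1 p hp q hq)).2.1
  obtain ⟨n, hn, hn'⟩ := exists_min A (fun q => q.1 - q.2) p hp (2 * ρ)
    fun q hq => ((mdist_le_iff _ _ _).mp (h1 p hp q hq)).2.2.2
  have sub : ∀ q ∈ A, q ∈ rbox ρ (m.1 + m.2) (n.1 - n.2) := by
    intro q hq
    have a1 := hm' q hq
    have a2 := hn' q hq
    have a3 := (mdist_le_iff _ _ _).mp (h1 m hm q hq)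
    have a4 := (mdist_le_iff _ _ _).mp (h1 n hn q hq)
    simp only [rbox, Set.mem_setOf_eq] at *
    omega
  refine ⟨m.1 + m.2, n.1 - n.2, Set.Subset.antisymm sub ?_⟩
  intro q hq
  by_contra hc
  obtain ⟨w, hw, hw'⟩ := h2 q hc
  have := sub w hw
  refine absurd ((mdist_le_iff q w (2 * ρ)).mpr ?_) (not_le.mpr hw')
  simp only [rbox, Set.mem_setOf_eq] at this hq
  omega

/-- For `ρ ≥ 1`, the maximal anticodes of Manhattan diameter `2ρ` in ℤ² are exactly the
translates of the Lee sphere of radius `ρ` and the translates of the quadricentred Lee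
sphere of radius `ρ`. -/
theorem stmt_0 (ρ : ℤ) (hρ : 1 ≤ ρ) (A : Set (ℤ × ℤ)) :
    IsMaxAnticode A (2 * ρ) ↔
      ((∃ a b : ℤ, A = {p : ℤ × ℤ | |p.1 - a| + |p.2 - b| ≤ ρ}) ∨
       (∃ a b : ℤ, A = {p : ℤ × ℤ |
          min (min (|p.1 - a| + |p.2 - b|) (|p.1 - a - 1| + |p.2 - b|))
              (min (|p.1 - a| + |p.2 - b - 1|) (|p.1 - a - 1| + |p.2 - b - 1|)) ≤ ρ - 1})) := by
  constructor
  · intro h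
    obtain ⟨u, v, rfl⟩ := max_eq_rbox ρ A h
    rcases Int.emod_two_eq_zero_or_one (u + v) with hp | hp
    · left
      refine ⟨(u + v) / 2 + ρ, u - (u + v) / 2, ?_⟩
      rw [lee_eq]
      congr 1 <;> omega
    · right
      refine ⟨(u + v) / 2 + ρ, u - (u + v) / 2 - 1, ?_⟩
      rw [quad_eq]
      congr 1 <;> omega
  · rintro (⟨a, b, rfl⟩ | ⟨a, b, rfl⟩)
    · rw [lee_eq]
      exact rbox_max _ _ _ hρ
    · rw [quad_eq]
      exact rbox_max _ _ _ hρ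
end

section
/- Let r ≥ 1 be an integer. A set A ⊆ ℤ² is a maximal anticode of hexagonal diameter r if and only if A is a translate of the set A_i = {(x,y) ∈ ℤ² : 0 ≤ x ≤ r, 0 ≤ y ≤ r, x−i ≤ y ≤ x−i+r} for some integer i with 0 ≤ i ≤ r. -/
/-- Hexagonal (grid) distance on ℤ²: the graph distance in the hexagonal grid, where
`(i,j)` is adjacent to `(i±1,j)`, `(i,j±1)`, `(i+1,j+1)` and `(i−1,j−1)`. -/
def hdist (p q : ℤ × ℤ) : ℤ :=
  if 0 ≤ (q.1 - p.1) * (q.2 - p.2) then max |q.1 - p.1| |q.2 - p.2|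
  else |q.1 - p.1| + |q.2 - p.2|

/-- `A` is a maximal anticode of hexagonal diameter `r`. -/
def IsMaxAnticodeHex (A : Set (ℤ × ℤ)) (r : ℤ) : Prop :=
  (∀ p ∈ A, ∀ q ∈ A, hdist p q ≤ r) ∧
  ∀ p : ℤ × ℤ, p ∉ A → ∃ q ∈ A, r < hdist p q

theorem hdist_le_iff (p q : ℤ × ℤ) (r : ℤ) : hdist p q ≤ r ↔
    (q.1 - p.1 ≤ r ∧ p.1 - q.1 ≤ r) ∧ (q.2 - p.2 ≤ r ∧ p.2 - q.2 ≤ r) ∧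
    ((q.2 - q.1) - (p.2 - p.1) ≤ r ∧ (p.2 - p.1) - (q.2 - q.1) ≤ r) := by
  obtain ⟨a, b⟩ := p
  obtain ⟨c, d⟩ := q
  unfold hdist
  dsimp only
  simp only [abs_eq_max_neg]
  split_ifs with h
  · rcases mul_nonneg_iff.1 h with ⟨h1, h2⟩ | ⟨h1, h2⟩ <;> omega
  · rcases mul_neg_iff.1 (not_le.1 h) with ⟨h1, h2⟩ | ⟨h1, h2⟩ <;> omega

theorem exists_min_of_spread (A : Set (ℤ × ℤ)) (r : ℤ) (f : ℤ × ℤ → ℤ) (hne : A.Nonempty)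
    (h : ∀ p ∈ A, ∀ q ∈ A, f p - f q ≤ r) : ∃ p ∈ A, ∀ q ∈ A, f p ≤ f q := by
  obtain ⟨p0, hp0⟩ := hne
  obtain ⟨m, ⟨p, hp, rfl⟩, hm⟩ := Int.exists_least_of_bdd (P := fun m => ∃ p ∈ A, f p = m)
    ⟨f p0 - r, by
      rintro z ⟨q, hq, rfl⟩
      have := h p0 hp0 q hq
      omega⟩ ⟨_, p0, hp0, rfl⟩
  exact ⟨p, hp, fun q hq => hm _ ⟨q, hq, rfl⟩⟩

/-- For `r ≥ 1`, the maximal anticodes of hexagonal diameter `r` in ℤ² are exactly the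
translates of the anticodes `A_i = {(x,y) : 0 ≤ x ≤ r, 0 ≤ y ≤ r, x−i ≤ y ≤ x−i+r}`
for `0 ≤ i ≤ r`. -/
theorem stmt_2 (r : ℤ) (hr : 1 ≤ r) (A : Set (ℤ × ℤ)) :
    IsMaxAnticodeHex A r ↔
      ∃ a b i : ℤ, 0 ≤ i ∧ i ≤ r ∧
        A = {p : ℤ × ℤ | 0 ≤ p.1 - a ∧ p.1 - a ≤ r ∧ 0 ≤ p.2 - b ∧ p.2 - b ≤ r ∧
              (p.1 - a) - i ≤ p.2 - b ∧ p.2 - b ≤ (p.1 - a) - i + r} := by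
  constructor
  · rintro ⟨h1, h2⟩
    simp only [hdist_le_iff] at h1
    have hne : A.Nonempty := by
      by_contra hn
      rw [Set.not_nonempty_iff_eq_empty] at hn
      subst hn
      obtain ⟨q, hq, _⟩ := h2 (0, 0) (by simp)
      exact hq
    obtain ⟨p, hp, hpm⟩ := exists_min_of_spread A r (fun p => p.1) hne
      (fun p hp q hq => (h1 p hp q hq).1.2)
    obtain ⟨q, hq, hqm⟩ := exists_min_of_spread A r (fun p => p.2) hne
      (fun p hp q hq => (h1 p hp q hq).2.1.2)
    obtain ⟨s, hs, hsm⟩ := exists_min_of_spread A r (fun p => p.2 - p.1) hne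
      (fun p hp q hq => (h1 p hp q hq).2.2.2)
    refine ⟨p.1, q.2, q.2 - p.1 - (s.2 - s.1), ?_, ?_, ?_⟩
    · have := hpm q hq
      have := hsm q hq
      omega
    · have := hqm s hs
      have := h1 p hp s hs
      omega
    · ext t
      simp only [Set.mem_ofPred_eq]
      constructor
      · intro ht
        have := hpm t ht
        have := hqm t ht
        have := hsm t ht
        have := h1 p hp t ht
        have := h1 q hq t ht
        have := h1 s hs t ht
        omega
      · intro ht
        by_contra hn
        obtain ⟨u, hu, hlt⟩ := h2 t hn
        rw [← not_le, hdist_le_iff] at hlt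
        have := hpm u hu
        have := hqm u hu
        have := hsm u hu
        have := h1 p hp u hu
        have := h1 q hq u hu
        have := h1 s hs u hu
        omega
  · rintro ⟨a, b, i, hi0, hir, rfl⟩
    constructor
    · intro p hp q hq
      simp only [Set.mem_ofPred_eq] at hp hq
      rw [hdist_le_iff]
      omega
    · intro p hp
      by_contra! hn
      have e1 := hn (a, b) (by simp only [Set.mem_ofPred_eq]; omega)
      have e2 := hn (a + r, b + r) (by simp only [Set.mem_ofPred_eq]; omega)
      have e3 := hn (a, b + r - i) (by simp only [Set.mem_ofPred_eq]; omega)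
      have e4 := hn (a + i, b) (by simp only [Set.mem_ofPred_eq]; omega)
      rw [hdist_le_iff] at e1 e2 e3 e4
      simp only [Set.mem_ofPred_eq] at hp
      dsimp only at e1 e2 e3 e4
      omega
end

section
/- Let r and ℓ be positive integers and let A ⊆ ℤ² be a nonempty set whose points have pairwise Manhattan distance at most r. Let W = {c ∈ ℤ² : there exists a ∈ A with d(c,a) ≤ ℓ} be the set of centres of Lee spheres of radius ℓ that intersect A nontrivially. Then 2·|W| ≤ (r+2ℓ)² + 2(r+2ℓ) + 2. -/
lemma code_inj (n i j i' j' : ℤ) (hj : 0 ≤ j) (hjn : j < n)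
    (hj' : 0 ≤ j') (hjn' : j' < n) (hp : (i + j) % 2 = (i' + j') % 2)
    (h : (i * n + j) / 2 = (i' * n + j') / 2) : i = i' ∧ j = j' := by
  have key : ∀ a b a' b' m : ℤ, 0 ≤ b → b < m → 0 ≤ b' → b' < m →
      a * m + b = a' * m + b' → a = a' ∧ b = b' := by
    intro a b a' b' m h1 h2 h3 h4 h5
    have : a = a' := by
      rcases lt_trichotomy a a' with h | h | h
      · nlinarith
      · exact h
      · nlinarith
    subst this
    exact ⟨rfl, by linarith⟩
  rcases Int.even_or_odd' n with ⟨m, hm | hm⟩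
  · have e1 : i * n + j = 2 * (i * m) + j := by rw [hm]; ring
    have e2 : i' * n + j' = 2 * (i' * m) + j' := by rw [hm]; ring
    rw [e1, e2] at h
    have := key i (j / 2) i' (j' / 2) m (by omega) (by omega) (by omega) (by omega) (by omega)
    omega
  · have e1 : i * n + j = 2 * (i * m) + i + j := by rw [hm]; ring
    have e2 : i' * n + j' = 2 * (i' * m) + i' + j' := by rw [hm]; ring
    apply key i j i' j' n hj hjn hj' hjn'
    rw [e1, e2] at h ⊢
    omega

/-- If `A ⊆ ℤ²` is a nonempty anticode of Manhattan diameter at most `r`, then the number `w`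
of Lee spheres of radius `ℓ` intersecting `A` nontrivially satisfies
`2w ≤ (r+2ℓ)² + 2(r+2ℓ) + 2`. -/
theorem stmt_3 (r ℓ : ℕ) (hr : 0 < r) (hℓ : 0 < ℓ) (A : Set (ℤ × ℤ)) (hA : A.Nonempty)
    (hdiam : ∀ p ∈ A, ∀ q ∈ A, mdist p q ≤ (r : ℤ)) :
    2 * {c : ℤ × ℤ | ∃ a ∈ A, mdist c a ≤ (ℓ : ℤ)}.ncard ≤
      (r + 2 * ℓ) ^ 2 + 2 * (r + 2 * ℓ) + 2 := by
  have hm : ∀ p q : ℤ × ℤ, ∀ d : ℤ, mdist p q ≤ d →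
      (q.1 + q.2) - (p.1 + p.2) ≤ d ∧ (p.1 + p.2) - (q.1 + q.2) ≤ d ∧
      (q.1 - q.2) - (p.1 - p.2) ≤ d ∧ (p.1 - p.2) - (q.1 - q.2) ≤ d := by
    intro p q d h
    unfold mdist at h
    have h1 := le_abs_self (q.1 - p.1)
    have h2 := neg_abs_le (q.1 - p.1)
    have h3 := le_abs_self (q.2 - p.2)
    have h4 := neg_abs_le (q.2 - p.2)
    refine ⟨?_, ?_, ?_, ?_⟩ <;> linarith
  obtain ⟨p0, hp0⟩ := hA
  obtain ⟨u0, ⟨pu, hpu, hu⟩, humin⟩ := Int.exists_least_of_bdd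
    (P := fun z => ∃ p ∈ A, p.1 + p.2 = z)
    ⟨p0.1 + p0.2 - r, by
      rintro z ⟨p, hp, rfl⟩
      have := hm p p0 _ (hdiam p hp p0 hp0)
      omega⟩ ⟨_, p0, hp0, rfl⟩
  obtain ⟨v0, ⟨pv, hpv, hv⟩, hvmin⟩ := Int.exists_least_of_bdd
    (P := fun z => ∃ p ∈ A, p.1 - p.2 = z)
    ⟨p0.1 - p0.2 - r, by
      rintro z ⟨p, hp, rfl⟩
      have := hm p p0 _ (hdiam p hp p0 hp0)
      omega⟩ ⟨_, p0, hp0, rfl⟩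
  obtain ⟨D, hD⟩ : ∃ D : ℕ, D = r + 2 * ℓ := ⟨_, rfl⟩
  rw [← hD]
  have hW : ∀ c ∈ {c : ℤ × ℤ | ∃ a ∈ A, mdist c a ≤ (ℓ : ℤ)},
      0 ≤ c.1 + c.2 - (u0 - ℓ) ∧ c.1 + c.2 - (u0 - ℓ) ≤ D ∧
      0 ≤ c.1 - c.2 - (v0 - ℓ) ∧ c.1 - c.2 - (v0 - ℓ) ≤ D := by
    rintro c ⟨a, ha, hca⟩
    have h1 := hm c a _ hca
    have h2 := hm a pu _ (hdiam a ha pu hpu)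
    have h3 := hm a pv _ (hdiam a ha pv hpv)
    have h4 := humin _ ⟨a, ha, rfl⟩
    have h5 := hvmin _ ⟨a, ha, rfl⟩
    omega
  let f : ℤ × ℤ → ℤ := fun c =>
    ((c.1 + c.2 - (u0 - ℓ)) * ((D : ℤ) + 1) + (c.1 - c.2 - (v0 - ℓ))) / 2
  have hle := Set.ncard_le_ncard_of_injOn
    (s := {c : ℤ × ℤ | ∃ a ∈ A, mdist c a ≤ (ℓ : ℤ)})
    (t := ((Finset.Icc (0 : ℤ) (((D : ℤ) ^ 2 + 2 * D) / 2) : Finset ℤ) : Set ℤ)) f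
    (by
      intro c hc
      obtain ⟨h1, h2, h3, h4⟩ := hW c hc
      rw [Finset.mem_coe, Finset.mem_Icc]
      have h5 : 0 ≤ (c.1 + c.2 - (u0 - ℓ)) * ((D : ℤ) + 1) := by positivity
      have h6 : (c.1 + c.2 - (u0 - ℓ)) * ((D : ℤ) + 1) ≤ D ^ 2 + D := by nlinarith
      constructor
      · exact Int.ediv_nonneg (by linarith) (by norm_num)
      · exact Int.ediv_le_ediv (by norm_num) (by linarith))
    (by
      intro c hc c' hc' h
      obtain ⟨h1, h2, h3, h4⟩ := hW c hc
      obtain ⟨h1', h2', h3', h4'⟩ := hW c' hc'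
      have := code_inj ((D : ℤ) + 1) _ _ _ _ h3 (by omega) h3' (by omega) (by omega) h
      ext <;> omega)
    (Finset.finite_toSet _)
  rw [Set.ncard_coe_finset, Int.card_Icc] at hle
  have : (0 : ℤ) ≤ (D : ℤ) ^ 2 := by positivity
  zify
  omega
end

section
/- There is a constant C > 0 such that for every positive integer r, every distinct difference configuration D ⊆ ℤ² whose points have pairwise Manhattan distance at most r satisfies |D| ≤ r/√2 + C·r^(2/3). -/
/-- A set of points is a distinct difference configuration if all differences between
distinct pairs of its points are distinct. -/
def IsDDC {G : Type*} [Sub G] (D : Set G) : Prop :=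
  ∀ p₁ ∈ D, ∀ p₂ ∈ D, ∀ q₁ ∈ D, ∀ q₂ ∈ D,
    p₂ - p₁ = q₂ - q₁ → p₂ ≠ p₁ → p₁ = q₁ ∧ p₂ = q₂

lemma exists_min_box (D : Finset (ℤ × ℤ)) (f : ℤ × ℤ → ℤ) (r : ℕ)
    (h : ∀ p ∈ D, ∀ q ∈ D, f q - f p ≤ r) :
    ∃ a : ℤ, ∀ p ∈ D, a ≤ f p ∧ f p ≤ a + r := by
  rcases D.eq_empty_or_nonempty with rfl | hne
  · exact ⟨0, by simp⟩
  · obtain ⟨x, hx, hmin⟩ := D.exists_min_image f hne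
    exact ⟨f x, fun p hp => ⟨hmin p hp, by have := h x hx p hp; omega⟩⟩

lemma energy_bound (D P : Finset (ℤ × ℤ)) (hD : IsDDC (D : Set (ℤ × ℤ)))
    (hP : P = D.image (fun p => (p.1 + p.2, p.1 - p.2))) (n : ℕ) :
    Finset.addEnergy P (Finset.Ico (0:ℤ) (2*n) ×ˢ Finset.Ico (0:ℤ) (2*n))
      ≤ D.card * (2*n)^2 + (2*n)^3 * n := by
  classical
  set S := Finset.Ico (0:ℤ) (2*n) ×ˢ Finset.Ico (0:ℤ) (2*n) with hS
  have hIc : (Finset.Ico (0:ℤ) (2*n)).card = 2*n := by simp; omega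
  have hIn : (Finset.Ico (0:ℤ) n).card = n := by simp
  have hSc : S.card = (2*n)^2 := by rw [hS, Finset.card_product, hIc]; ring
  have hPc : P.card ≤ D.card := by rw [hP]; exact Finset.card_image_le
  have key : ∀ p ∈ P, ∃ x ∈ D, p = (x.1 + x.2, x.1 - x.2) := by
    intro p hp
    rw [hP, Finset.mem_image] at hp
    obtain ⟨x, hx, rfl⟩ := hp
    exact ⟨x, hx, rfl⟩
  rw [Finset.addEnergy]
  rw [← Finset.card_filter_add_card_filter_not (fun x => x.1.1 = x.1.2)]
  apply add_le_add
  · calc _ ≤ (P ×ˢ S).card := by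
          apply Finset.card_le_card_of_injOn (fun x => (x.1.1, x.2.1))
          · rintro ⟨⟨p, q⟩, ⟨k, l⟩⟩ hx
            simp only [Finset.coe_filter, Finset.mem_filter, Finset.mem_product, Set.mem_ofPred_eq] at hx
            simp only [Finset.coe_product, Set.mem_prod, Finset.mem_coe]
            exact ⟨hx.1.1.1.1, hx.1.1.2.1⟩
          · rintro ⟨⟨p, q⟩, ⟨k, l⟩⟩ hx ⟨⟨p', q'⟩, ⟨k', l'⟩⟩ hx' he
            simp only [Finset.coe_filter, Finset.mem_filter, Finset.mem_product, Set.mem_ofPred_eq] at hx hx'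
            simp only [Prod.mk.injEq] at he
            obtain ⟨⟨_, h1⟩, rfl⟩ := hx
            obtain ⟨⟨_, h2⟩, rfl⟩ := hx'
            obtain ⟨rfl, rfl⟩ := he
            have h1 := add_left_cancel h1
            have h2 := add_left_cancel h2
            subst h1; subst h2; rfl
      _ ≤ _ := by rw [Finset.card_product, hSc]; gcongr
  · calc _ ≤ (S ×ˢ (Finset.Ico (0:ℤ) (2*n) ×ˢ Finset.Ico (0:ℤ) n)).card := by
          apply Finset.card_le_card_of_injOn (fun x => (x.2.1, (x.2.2.1, x.2.2.2 / 2)))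
          · rintro ⟨⟨p, q⟩, ⟨k, l⟩⟩ hx
            simp only [hS, Finset.coe_filter, Finset.mem_filter, Finset.mem_product, Set.mem_ofPred_eq, Finset.mem_Ico] at hx
            simp only [hS, Finset.coe_product, Set.mem_prod, Finset.mem_coe, Finset.mem_product, Finset.mem_Ico]
            omega
          · rintro ⟨⟨p, q⟩, ⟨k, l⟩⟩ hx ⟨⟨p', q'⟩, ⟨k', l'⟩⟩ hx' he
            simp only [Finset.coe_filter, Finset.mem_filter, Finset.mem_product, Set.mem_ofPred_eq] at hx hx'
            simp only [Prod.mk.injEq] at he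
            obtain ⟨⟨⟨⟨hp, hq⟩, _⟩, h1⟩, hne⟩ := hx
            obtain ⟨⟨⟨⟨hp', hq'⟩, _⟩, h1'⟩, hne'⟩ := hx'
            obtain ⟨x, hx, rfl⟩ := key p hp
            obtain ⟨y, hy, rfl⟩ := key q hq
            obtain ⟨x', hx', rfl⟩ := key p' hp'
            obtain ⟨y', hy', rfl⟩ := key q' hq'
            obtain ⟨rfl, he1, he2⟩ := he
            obtain ⟨k1, k2⟩ := k
            obtain ⟨l1, l2⟩ := l
            obtain ⟨m1, m2⟩ := l'
            simp only [Prod.mk_add_mk, Prod.mk.injEq] at h1 h1' he1 he2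
            have e2 : l2 = m2 := by omega
            have hxy : x ≠ y := by rintro rfl; exact hne rfl
            have := hD y hy x hx y' hy' x' hx' (by ext <;> simp <;> omega) hxy
            obtain ⟨rfl, rfl⟩ := this
            subst e2; subst he1; rfl
      _ ≤ _ := by
          rw [Finset.card_product, hSc, Finset.card_product, hIc, hIn]
          apply le_of_eq; ring

lemma main_ineq (D : Finset (ℤ × ℤ)) (hD : IsDDC (D : Set (ℤ × ℤ))) (r : ℕ)
    (hr : ∀ p ∈ D, ∀ q ∈ D, mdist p q ≤ (r : ℤ)) (n : ℕ) :
    (D.card * (2*n)^2)^2 ≤ (r + 2*n)^2 * (D.card * (2*n)^2 + (2*n)^3 * n) := by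
  classical
  obtain ⟨a, ha⟩ := exists_min_box D (fun p => p.1 + p.2) r (by
    intro p hp q hq
    have := hr p hp q hq
    unfold mdist at this
    have h1 := le_abs_self (q.1 - p.1)
    have h2 := le_abs_self (q.2 - p.2)
    omega)
  obtain ⟨b, hb⟩ := exists_min_box D (fun p => p.1 - p.2) r (by
    intro p hp q hq
    have := hr p hp q hq
    unfold mdist at this
    have h1 := le_abs_self (q.1 - p.1)
    have h2 := neg_le_abs (q.2 - p.2)
    omega)
  set P := D.image (fun p : ℤ × ℤ => (p.1 + p.2, p.1 - p.2)) with hP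
  have hPc : P.card = D.card := by
    apply Finset.card_image_of_injective
    rintro ⟨x, y⟩ ⟨z, w⟩ h
    simp only [Prod.mk.injEq] at h ⊢
    omega
  have hE := energy_bound D P hD hP n
  have hIc : (Finset.Ico (0:ℤ) (2*n)).card = 2*n := by simp; omega
  set S := Finset.Ico (0:ℤ) (2*n) ×ˢ Finset.Ico (0:ℤ) (2*n) with hS
  have hSc : S.card = (2*n)^2 := by rw [hS, Finset.card_product, hIc]; ring
  let U := Finset.Ico a (a + (r + 2*n : ℕ)) ×ˢ Finset.Ico b (b + (r + 2*n : ℕ))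
  have hU : U.card = (r + 2*n)^2 := by
    simp only [U, Finset.card_product, Int.card_Ico, add_sub_cancel_left, Int.toNat_natCast]; ring
  have hc := Finset.card_sq_le_card_mul_addEnergy P S U
  rw [Finset.filter_true_of_mem, Finset.card_product, hPc, hSc, hU] at hc
  · exact hc.trans (Nat.mul_le_mul_left _ hE)
  · rintro ⟨p, k⟩ h
    simp only [hP, hS, Finset.mem_product, Finset.mem_image, Finset.mem_Ico] at h
    obtain ⟨⟨x, hx, rfl⟩, hk⟩ := h
    have h1 := ha x hx
    have h2 := hb x hx
    simp only [U, Finset.mem_product, Finset.mem_Ico, Prod.fst_add, Prod.snd_add]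
    push_cast
    omega

/-- Upper bound for `DD̄(m,r)`: every distinct difference configuration with pairwise
Manhattan distance at most `r` has at most `r/√2 + C·r^(2/3)` dots. -/
theorem stmt_6 :
    ∃ C : ℝ, 0 < C ∧ ∀ r : ℕ, 0 < r → ∀ D : Finset (ℤ × ℤ), IsDDC (D : Set (ℤ × ℤ)) →
      (∀ p ∈ D, ∀ q ∈ D, mdist p q ≤ (r : ℤ)) →
      (D.card : ℝ) ≤ (r : ℝ) / Real.sqrt 2 + C * (r : ℝ) ^ ((2 : ℝ) / 3) := by
  refine ⟨11, by norm_num, ?_⟩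
  intro r hr D hD hdist
  have hr1 : (1:ℝ) ≤ r := by exact_mod_cast hr
  set t : ℝ := (r:ℝ) ^ ((2:ℝ)/3) with ht
  have ht1 : 1 ≤ t := Real.one_le_rpow hr1 (by norm_num)
  have htr : t ≤ r := by
    calc t ≤ (r:ℝ)^(1:ℝ) := Real.rpow_le_rpow_of_exponent_le hr1 (by norm_num)
      _ = r := Real.rpow_one _
  have ht3 : t^3 = (r:ℝ)^2 := by
    rw [ht, ← Real.rpow_natCast, ← Real.rpow_mul (by positivity)]
    norm_num
  have hm := main_ineq D hD r hdist ⌈t⌉₊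
  have hn1 : t ≤ (⌈t⌉₊ : ℝ) := Nat.le_ceil t
  have hn2 : (⌈t⌉₊ : ℝ) < t + 1 := Nat.ceil_lt_add_one (by linarith)
  have hm' : ((D.card:ℝ) * (2*⌈t⌉₊)^2)^2 ≤
      (r + 2*⌈t⌉₊)^2 * (D.card * (2*⌈t⌉₊)^2 + (2*⌈t⌉₊)^3 * ⌈t⌉₊) := by exact_mod_cast hm
  set n : ℝ := (⌈t⌉₊ : ℝ) with hn
  set m : ℝ := (D.card : ℝ) with hmdef
  have hm0 : 0 ≤ m := by positivity
  have hnpos : 0 < n := by linarith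
  set A : ℝ := r + 2*n with hA
  have hApos : 0 < A := by linarith
  have hq : m^2 ≤ (A^2/(2*n)^2) * m + (A / √2)^2 := by
    rw [div_pow, Real.sq_sqrt (by norm_num)]
    have h4 : 0 < (2*n)^4 := by positivity
    refine le_of_mul_le_mul_right ?_ h4
    calc m^2 * (2*n)^4 = (m * (2*n)^2)^2 := by ring
      _ ≤ _ := hm'
      _ = _ := by field_simp
  set y := A / √2 with hy
  set x := A^2/(2*n)^2 with hx
  have hx0 : 0 ≤ x := by positivity
  have hy0 : 0 < y := by positivity
  have hmxy : m ≤ x + y := by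
    by_contra! hcon
    nlinarith [mul_pos (sub_pos.2 hcon) hy0, mul_nonneg hm0 (sub_pos.2 hcon).le]
  have hxt : x ≤ 25/4 * t := by
    rw [hx, div_le_iff₀ (by positivity)]
    have hA5 : A ≤ 5 * r := by linarith
    calc A^2 ≤ (5*r)^2 := by gcongr
      _ = 25/4 * t * (2*t)^2 := by rw [mul_pow, ← ht3]; ring
      _ ≤ _ := by gcongr
  have hyt : y ≤ r / √2 + 4 * t := by
    rw [hy, hA, add_div]
    gcongr
    calc 2*n/√2 ≤ 2*n := div_le_self (by positivity) (by rw [Real.one_le_sqrt]; norm_num)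
      _ ≤ 4*t := by linarith
  linarith
end

section
/- There exists a positive integer M such that for every integer m ≥ M there is no distinct difference configuration D ⊆ ℤ² with |D| = m in which every pair of points is at hexagonal distance at most m−1. In particular, since the dots of a honeycomb array of order m form such a configuration, honeycomb arrays exist for only finitely many orders m. -/
theorem hdist_bounds (p q : ℤ × ℤ) (d : ℤ) (h : hdist p q ≤ d) :
    q.1 - p.1 ≤ d ∧ q.2 - p.2 ≤ d ∧ (q.1 - q.2) - (p.1 - p.2) ≤ d := by
  unfold hdist at h
  split_ifs at h with h0
  · obtain ⟨h1, h2⟩ := max_le_iff.1 h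
    have h1' := abs_le.1 h1
    have h2' := abs_le.1 h2
    refine ⟨h1'.2, h2'.2, ?_⟩
    by_contra hc
    have hx : 0 < q.1 - p.1 := by linarith
    have hy : q.2 - p.2 < 0 := by linarith
    nlinarith
  · have h1 := le_abs_self (q.1 - p.1)
    have h2 := le_abs_self (q.2 - p.2)
    have h3 := neg_le_abs (q.2 - p.2)
    have h4 := abs_nonneg (q.1 - p.1)
    have h5 := abs_nonneg (q.2 - p.2)
    refine ⟨by linarith, by linarith, by linarith⟩

/-- Windowed second-moment bound for distinct difference configurations. -/
theorem window_bound (D T K : Finset (ℤ × ℤ)) (hD : IsDDC (D : Set (ℤ × ℤ)))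
    (hT : ∀ p ∈ D, ∀ u ∈ K, p - u ∈ T) :
    (D.card * K.card) ^ 2 ≤ T.card * (D.card * K.card + K.card ^ 2) := by
  classical
  set A : ℤ × ℤ → Finset (ℤ × ℤ) := fun t => D.filter (fun p => p - t ∈ K) with hA
  have h1 : ∑ t ∈ T, (A t).card = D.card * K.card := by
    have := Finset.sum_card_bipartiteAbove_eq_sum_card_bipartiteBelow
      (s := T) (t := D) (fun t p => p - t ∈ K)
    simp only [Finset.bipartiteAbove, Finset.bipartiteBelow] at this
    rw [hA, this, Finset.sum_const_nat (m := K.card)]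
    intro p hp
    refine Finset.card_bij' (fun t _ => p - t) (fun u _ => p - u) ?_ ?_ ?_ ?_
    · intro t ht
      exact (Finset.mem_filter.1 ht).2
    · intro u hu
      refine Finset.mem_filter.2 ⟨hT p hp u hu, ?_⟩
      simpa using hu
    · intro t _
      simp
    · intro t _
      simp
  have h2 : ∑ t ∈ T, (A t).card ^ 2 ≤ D.card * K.card + K.card ^ 2 := by
    have e : ∑ t ∈ T, (A t).card ^ 2 = (T.sigma (fun t => A t ×ˢ A t)).card := by
      rw [Finset.card_sigma]
      refine Finset.sum_congr rfl fun t _ => ?_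
      rw [Finset.card_product, sq]
    rw [e, ← Finset.card_filter_add_card_filter_not (fun x => x.2.1 = x.2.2)]
    refine add_le_add ?_ ?_
    · rw [← Finset.card_product]
      refine Finset.card_le_card_of_injOn (fun x => (x.2.1, x.2.1 - x.1)) ?_ ?_
      · rintro ⟨t, p, q⟩ hx
        simp [hA] at hx ⊢
        tauto
      · rintro ⟨t, p, q⟩ hx ⟨t', p', q'⟩ hx' h
        simp only [Finset.coe_filter, Set.mem_ofPred_eq, Prod.mk.injEq] at hx hx' h
        obtain ⟨h, h'⟩ := h
        have h3 := hx.2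
        have h4 := hx'.2
        subst h
        simp at h'
        subst h' h3 h4
        rfl
    · rw [sq, ← Finset.card_product]
      refine Finset.card_le_card_of_injOn (fun x => (x.2.1 - x.1, x.2.2 - x.1)) ?_ ?_
      · rintro ⟨t, p, q⟩ hx
        simp [hA] at hx ⊢
        tauto
      · rintro ⟨t, p, q⟩ hx ⟨t', p', q'⟩ hx' h
        simp only [Finset.coe_filter, Set.mem_ofPred_eq, Prod.mk.injEq, Finset.mem_sigma,
          Finset.mem_product, hA, Finset.mem_filter] at hx hx' h
        obtain ⟨h, h'⟩ := h
        have key := hD q hx.1.2.2.1 p hx.1.2.1.1 q' hx'.1.2.2.1 p' hx'.1.2.1.1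
          (by
            have : p - q = (p - t) - (q - t) := by abel
            rw [this, h, h']; abel) hx.2
        obtain ⟨k1, k2⟩ := key
        subst k1 k2
        simp at h
        subst h
        rfl
  calc (D.card * K.card) ^ 2 = (∑ t ∈ T, (A t).card) ^ 2 := by rw [h1]
    _ ≤ T.card * ∑ t ∈ T, (A t).card ^ 2 := sq_sum_le_card_mul_sum_sq
    _ ≤ _ := Nat.mul_le_mul_left _ h2

theorem stmt_8 :
    ∃ M : ℕ, 0 < M ∧ ∀ m : ℕ, M ≤ m →
      ¬ ∃ D : Finset (ℤ × ℤ), D.card = m ∧ IsDDC (D : Set (ℤ × ℤ)) ∧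
        ∀ p ∈ D, ∀ q ∈ D, hdist p q ≤ (m : ℤ) - 1 := by
  classical
  refine ⟨1000000, by norm_num, ?_⟩
  rintro m hm ⟨D, hcard, hD, hd⟩
  obtain ⟨k, r, hr, hk, hmk⟩ : ∃ k r : ℕ, r < 100 ∧ 10000 ≤ k ∧ m = 100 * k + r :=
    ⟨m / 100, m % 100, by omega, by omega, by omega⟩
  have hne : D.Nonempty := Finset.card_pos.1 (by omega)
  obtain ⟨pa, hpa, ha⟩ := D.exists_min_image (fun p => p.1) hne
  obtain ⟨pb, hpb, hb⟩ := D.exists_min_image (fun p => p.2) hne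
  obtain ⟨pc, hpc, hc⟩ := D.exists_min_image (fun p => p.1 - p.2) hne
  have ha2 := fun p hp => (hdist_bounds pa p _ (hd pa hpa p hp)).1
  have hb2 := fun p hp => (hdist_bounds pb p _ (hd pb hpb p hp)).2.1
  have hc2 := fun p hp => (hdist_bounds pc p _ (hd pc hpc p hp)).2.2
  generalize pa.1 = a at *
  generalize pb.2 = b at *
  generalize pc.1 - pc.2 = c at *
  set K : Finset (ℤ × ℤ) := Finset.Ico 0 (k : ℤ) ×ˢ Finset.Ico 0 (k : ℤ) with hK
  have hKc : K.card = k * k := by simp [hK, Finset.card_product]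
  set B : Finset (ℤ × ℤ) :=
    Finset.Ico (a - k + 1) (a + m) ×ˢ Finset.Ico (b - k + 1) (b + m) with hB
  have hBc : (B.card : ℤ) = (m + k - 1) * (m + k - 1) := by
    simp only [hB, Finset.card_product, Int.card_Ico]
    push_cast
    rw [Int.toNat_of_nonneg (by omega), Int.toNat_of_nonneg (by omega)]
    ring
  have hbox : ∀ p ∈ D, ∀ u ∈ K, p - u ∈ B := by
    intro p hp u hu
    simp only [hK, hB, Finset.mem_product, Finset.mem_Ico, Prod.fst_sub, Prod.snd_sub] at hu ⊢
    have := ha p hp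
    have := hb p hp
    have := ha2 p hp
    have := hb2 p hp
    omega
  obtain ⟨R, hRB, hRc, hRD⟩ : ∃ R : Finset (ℤ × ℤ), R ⊆ B ∧ (R.card : ℤ) = (24 * k) * (24 * k) ∧
      ∀ p ∈ D, ∀ u ∈ K, p - u ∉ R := by
    by_cases hcase : 2 * (a - b) - (m - 1) ≤ 2 * c
    · refine ⟨Finset.Ico (a - k + 1) (a - k + 1 + 24 * k) ×ˢ
        Finset.Ico (b + m - 24 * k) (b + m), ?_, ?_, ?_⟩
      · intro t ht
        simp only [hB, Finset.mem_product, Finset.mem_Ico] at ht ⊢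
        omega
      · simp only [Finset.card_product, Int.card_Ico]
        push_cast
        rw [Int.toNat_of_nonneg (by omega), Int.toNat_of_nonneg (by omega)]
        ring
      · intro p hp u hu ht
        simp only [hK, Finset.mem_product, Finset.mem_Ico, Prod.fst_sub, Prod.snd_sub] at hu ht
        have := hc p hp
        omega
    · refine ⟨Finset.Ico (a + m - 24 * k) (a + m) ×ˢ
        Finset.Ico (b - k + 1) (b - k + 1 + 24 * k), ?_, ?_, ?_⟩
      · intro t ht
        simp only [hB, Finset.mem_product, Finset.mem_Ico] at ht ⊢
        omega
      · simp only [Finset.card_product, Int.card_Ico]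
        push_cast
        rw [Int.toNat_of_nonneg (by omega), Int.toNat_of_nonneg (by omega)]
        ring
      · intro p hp u hu ht
        simp only [hK, Finset.mem_product, Finset.mem_Ico, Prod.fst_sub, Prod.snd_sub] at hu ht
        have := hc2 p hp
        omega
  have hw := window_bound D (B \ R) K hD
    (fun p hp u hu => Finset.mem_sdiff.2 ⟨hbox p hp u hu, hRD p hp u hu⟩)
  have hTc : ((B \ R).card : ℤ) = (m + k - 1) * (m + k - 1) - (24 * k) * (24 * k) := by
    have := Finset.card_sdiff_add_card_eq_card hRB
    rw [← hBc, ← hRc, ← this]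
    push_cast
    ring
  rw [hcard, hKc] at hw
  have hz : ((m : ℤ) * (k * k)) ^ 2 ≤
      ((m + k - 1) * (m + k - 1) - (24 * k) * (24 * k)) * (m * (k * k) + (k * k) ^ 2) := by
    rw [← hTc]
    exact_mod_cast hw
  have hkz : (10000 : ℤ) ≤ k := by exact_mod_cast hk
  have hm1 : (100 : ℤ) * k ≤ m := by exact_mod_cast (by omega : 100 * k ≤ m)
  have hm2 : (m : ℤ) ≤ 101 * k := by exact_mod_cast (by omega : m ≤ 101 * k)
  generalize (m : ℤ) = x at *
  generalize (k : ℤ) = y at *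
  -- the area is at most x ^ 2 - 370 * y ^ 2
  have hN : (x + y - 1) * (x + y - 1) - (24 * y) * (24 * y) ≤ x ^ 2 - 370 * y ^ 2 := by
    nlinarith
  have hx0 : 0 < x := by linarith
  have hpos : 0 < y * y := by positivity
  have h3 : (x * (y * y)) ^ 2 ≤ (x ^ 2 - 370 * y ^ 2) * (x * (y * y) + (y * y) ^ 2) :=
    hz.trans (mul_le_mul_of_nonneg_right hN (by positivity))
  have h4 : x ^ 2 * (y * y) ≤ (x ^ 2 - 370 * y ^ 2) * (x + y * y) := by
    refine le_of_mul_le_mul_right ?_ hpos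
    linarith
  have h5 : x ^ 3 ≤ (101 * y) ^ 3 := by gcongr
  have h6 : 0 ≤ 370 * y ^ 2 * x := by positivity
  have h7 : 10000 * y ^ 3 ≤ y * y ^ 3 := mul_le_mul_of_nonneg_right hkz (by positivity)
  have h8 : 0 < y ^ 3 := by positivity
  linarith
end

section
/- There is a constant C > 0 such that for every positive integer r, every distinct difference configuration D ⊆ ℤ² whose points have pairwise Euclidean distance at most r satisfies |D| ≤ (√π/2)·r + C·r^(2/3). -/
/-- Euclidean distance on ℝ². -/
noncomputable def edist2 (x y : ℝ × ℝ) : ℝ := Real.sqrt ((y.1 - x.1) ^ 2 + (y.2 - x.2) ^ 2)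

/-- The embedding of ℤ² in ℝ². -/
def toR2 (p : ℤ × ℤ) : ℝ × ℝ := ((p.1 : ℝ), (p.2 : ℝ))

open MeasureTheory Set

lemma radial_bound (U : Set ℝ) (R : ℝ) (hR : 0 ≤ R) (hU : ∀ x, 0 < x → x ∈ U → x ≤ R) :
    ∫⁻ x in Ioi (0:ℝ), ENNReal.ofReal x * U.indicator (fun _ => (1 : ENNReal)) x ≤ ENNReal.ofReal (R ^ 2 / 2) := by
  have h1 : ∫⁻ x in Ioc (0:ℝ) R, ENNReal.ofReal x = ENNReal.ofReal (R ^ 2 / 2) := by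
    rw [← ofReal_integral_eq_lintegral_ofReal]
    · rw [← intervalIntegral.integral_of_le hR, integral_id]; congr 1; ring
    · exact (continuous_id.integrableOn_Ioc)
    · filter_upwards [ae_restrict_mem measurableSet_Ioc] with x hx
      exact hx.1.le
  rw [← h1, ← lintegral_indicator measurableSet_Ioi, ← lintegral_indicator measurableSet_Ioc]
  apply lintegral_mono
  intro x
  by_cases hx : 0 < x
  · by_cases hxU : x ∈ U
    · have := hU x hx hxU
      simp [indicator, hx, hxU, this]
    · simp [indicator, hxU]
  · simp [indicator, hx]

lemma isodiam (A : Set (ℝ × ℝ)) (hA : MeasurableSet A) (d : ℝ) (hd : 0 ≤ d)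
    (h0 : (0, 0) ∈ A) (hpos : ∀ a ∈ A, 0 ≤ a.1)
    (hdiam : ∀ a ∈ A, ∀ b ∈ A, (a.1 - b.1) ^ 2 + (a.2 - b.2) ^ 2 ≤ d ^ 2) :
    volume A ≤ ENNReal.ofReal (Real.pi / 4 * d ^ 2) := by
  set g : ℝ × ℝ → ENNReal := fun p => ENNReal.ofReal p.1 *
      A.indicator (fun _ => (1 : ENNReal)) (p.1 * Real.cos p.2, p.1 * Real.sin p.2) with hg
  have hgm : Measurable g := by
    apply Measurable.mul (by fun_prop)
    exact (measurable_const.indicator hA).comp (by fun_prop)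
  set f : ℝ → ENNReal := fun θ => ∫⁻ x in Ioi (0:ℝ), g (x, θ) with hf
  have hfm : Measurable f := by
    have : Measurable (Function.uncurry fun θ x => g (x, θ)) := by
      exact hgm.comp measurable_swap
    exact this.lintegral_prod_right
  have hvol : volume A = ∫⁻ θ in Ioo (-Real.pi) Real.pi, f θ := by
    rw [← lintegral_indicator_one hA, ← lintegral_comp_polarCoord_symm]
    rw [polarCoord_target, Measure.volume_eq_prod, setLIntegral_prod_symm]
    · rfl
    · exact hgm.aemeasurable
  have key : ∀ θ, f θ + f (θ - Real.pi / 2) ≤ ENNReal.ofReal (d ^ 2 / 2) := by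
    intro θ
    set U : ℝ → Set ℝ := fun θ => {x | (x * Real.cos θ, x * Real.sin θ) ∈ A} with hUdef
    have hfU : ∀ θ, f θ = ∫⁻ x in Ioi (0:ℝ), ENNReal.ofReal x *
        (U θ).indicator (fun _ => (1 : ENNReal)) x := fun θ => rfl
    have hUd : ∀ θ, ∀ x ∈ U θ, x ^ 2 ≤ d ^ 2 := by
      intro θ x hx
      have := hdiam _ hx _ h0
      simp only [sub_zero] at this
      nlinarith [Real.sin_sq_add_cos_sq θ]
    have hUU : ∀ x ∈ U θ, ∀ y ∈ U (θ - Real.pi / 2), x ^ 2 + y ^ 2 ≤ d ^ 2 := by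
      intro x hx y hy
      have := hdiam _ hx _ hy
      simp only [Real.cos_sub_pi_div_two, Real.sin_sub_pi_div_two] at this
      nlinarith [Real.sin_sq_add_cos_sq θ]
    set R := sSup (U θ ∩ Ioi 0)
    have hR0 : 0 ≤ R := Real.sSup_nonneg fun x hx => (le_of_lt hx.2)
    have hRd : R ≤ d := Real.sSup_le (fun x hx => abs_le_of_sq_le_sq' (hUd θ x hx.1) hd |>.2) hd
    have hbdd : BddAbove (U θ ∩ Ioi 0) :=
      ⟨d, fun x hx => abs_le_of_sq_le_sq' (hUd θ x hx.1) hd |>.2⟩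
    have hR2 : R ^ 2 ≤ d ^ 2 := by gcongr
    have b1 : f θ ≤ ENNReal.ofReal (R ^ 2 / 2) := by
      rw [hfU]
      exact radial_bound _ _ hR0 fun x hx hxU => le_csSup hbdd ⟨hxU, hx⟩
    have b2 : f (θ - Real.pi / 2) ≤ ENNReal.ofReal (Real.sqrt (d ^ 2 - R ^ 2) ^ 2 / 2) := by
      rw [hfU]
      refine radial_bound _ _ (Real.sqrt_nonneg _) fun y hy hyU => ?_
      apply Real.le_sqrt_of_sq_le
      have : R ≤ Real.sqrt (d ^ 2 - y ^ 2) := Real.sSup_le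
        (fun x hx => Real.le_sqrt_of_sq_le (by linarith [hUU x hx.1 y hyU])) (Real.sqrt_nonneg _)
      have h3 : R ^ 2 ≤ Real.sqrt (d ^ 2 - y ^ 2) ^ 2 := by gcongr
      rw [Real.sq_sqrt (by linarith [hUd _ y hyU])] at h3
      linarith
    rw [Real.sq_sqrt (by linarith)] at b2
    calc _ ≤ _ := add_le_add b1 b2
      _ = _ := by
        rw [← ENNReal.ofReal_add (by positivity) (by linarith)]; congr 1; ring
  have hzero : ∀ θ ∈ Ioo (-Real.pi) Real.pi, θ ∉ Icc (-(Real.pi / 2)) (Real.pi / 2) → f θ = 0 := by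
    intro θ hθ hn
    have hc : Real.cos θ < 0 := by
      rw [mem_Icc, not_and_or, not_le, not_le] at hn
      rcases hn with h | h
      · rw [← Real.cos_neg]
        exact Real.cos_neg_of_pi_div_two_lt_of_lt (by linarith) (by linarith [hθ.1, Real.pi_pos])
      · exact Real.cos_neg_of_pi_div_two_lt_of_lt (by linarith) (by linarith [hθ.2, Real.pi_pos])
    simp only [hf]
    rw [setLIntegral_congr_fun (g := fun _ => 0) measurableSet_Ioi]
    · simp
    · intro x hx
      have : (x * Real.cos θ, x * Real.sin θ) ∉ A := fun h => by
        have := hpos _ h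
        have h2 : x * Real.cos θ < 0 := mul_neg_of_pos_of_neg hx hc
        simp only at this
        linarith
      simp [hg, this]
  have htrans : ∫⁻ θ in Icc (-(Real.pi / 2)) 0, f θ = ∫⁻ θ in Icc 0 (Real.pi / 2), f (θ - Real.pi / 2) := by
    rw [← lintegral_indicator measurableSet_Icc, ← lintegral_indicator measurableSet_Icc,
      ← lintegral_sub_right_eq_self _ (Real.pi / 2)]
    congr 1; ext θ
    have : θ - Real.pi / 2 ∈ Icc (-(Real.pi / 2)) 0 ↔ θ ∈ Icc 0 (Real.pi / 2) := by
      simp only [mem_Icc]; constructor <;> rintro ⟨h1, h2⟩ <;> constructor <;> linarith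
    by_cases h : θ ∈ Icc 0 (Real.pi / 2)
    · rw [indicator_of_mem h, indicator_of_mem (this.2 h)]
    · rw [indicator_of_notMem h, indicator_of_notMem (fun h' => h (this.1 h'))]
  calc volume A = ∫⁻ θ in Ioo (-Real.pi) Real.pi, f θ := hvol
    _ ≤ ∫⁻ θ in Icc (-(Real.pi / 2)) (Real.pi / 2), f θ := by
      rw [← lintegral_indicator measurableSet_Icc, ← lintegral_indicator measurableSet_Ioo]
      apply lintegral_mono
      intro θ
      simp only [indicator]
      split_ifs with h1 h2
      · exact le_rfl
      · exact (hzero θ h1 h2).le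
      · exact zero_le
      · exact le_rfl
    _ ≤ ∫⁻ θ in Icc (-(Real.pi / 2)) 0 ∪ Icc 0 (Real.pi / 2), f θ := by
      apply lintegral_mono_set
      intro θ hθ
      rcases le_total θ 0 with h | h
      · exact Or.inl ⟨hθ.1, h⟩
      · exact Or.inr ⟨h, hθ.2⟩
    _ ≤ _ := lintegral_union_le _ _ _
    _ = ∫⁻ θ in Icc 0 (Real.pi / 2), (f θ + f (θ - Real.pi / 2)) := by
      rw [htrans, lintegral_add_left hfm, add_comm]
    _ ≤ ∫⁻ θ in Icc 0 (Real.pi / 2), ENNReal.ofReal (d ^ 2 / 2) := lintegral_mono fun θ => key θ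
    _ = ENNReal.ofReal (Real.pi / 4 * d ^ 2) := by
      rw [setLIntegral_const, Real.volume_Icc, ← ENNReal.ofReal_mul (by positivity)]
      congr 1; ring

open scoped Pointwise Combinatorics.Additive in
lemma energy_bound_s11 (D S : Finset (ℤ × ℤ)) (hD : IsDDC (D : Set (ℤ × ℤ))) :
    D.card ^ 2 * S.card ^ 2 ≤ (D + S).card * (D.card * S.card + S.card ^ 2) := by
  refine (Finset.le_card_add_mul_addEnergy D S).trans ?_
  gcongr
  unfold Finset.addEnergy
  rw [← Finset.card_filter_add_card_filter_not (fun x : ((ℤ × ℤ) × (ℤ × ℤ)) × ((ℤ × ℤ) × (ℤ × ℤ)) =>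
    x.1.1 = x.1.2)]
  apply add_le_add
  · rw [← Finset.card_product]
    apply Finset.card_le_card_of_injOn (fun x => (x.1.1, x.2.1))
    · intro x hx
      simp only [Finset.coe_filter, Finset.mem_filter, Finset.mem_product, mem_ofPred_eq] at hx
      simp [hx.1.1.1.1, hx.1.1.2.1]
    · rintro ⟨⟨a, b⟩, c, e⟩ hx ⟨⟨a', b'⟩, c', e'⟩ hx' h
      simp only [Finset.coe_filter, Finset.mem_filter, Finset.mem_product, mem_ofPred_eq] at hx hx'
      simp only [Prod.mk.injEq] at h ⊢
      obtain ⟨⟨-, h1⟩, rfl⟩ := hx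
      obtain ⟨⟨-, h2⟩, rfl⟩ := hx'
      obtain ⟨rfl, rfl⟩ := h
      have := add_left_cancel h1
      have := add_left_cancel h2
      simp_all
  · rw [sq, ← Finset.card_product]
    apply Finset.card_le_card_of_injOn (fun x => (x.2.1, x.2.2))
    · intro x hx
      simp only [Finset.coe_filter, Finset.mem_filter, Finset.mem_product, mem_ofPred_eq] at hx
      simp [hx.1.1.2.1, hx.1.1.2.2]
    · rintro ⟨⟨a, b⟩, c, e⟩ hx ⟨⟨a', b'⟩, c', e'⟩ hx' h
      simp only [Finset.coe_filter, Finset.mem_filter, Finset.mem_product, mem_ofPred_eq] at hx hx'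
      simp only [Prod.mk.injEq] at h ⊢
      obtain ⟨rfl, rfl⟩ := h
      obtain ⟨⟨⟨⟨ha, hb⟩, -⟩, h1⟩, hn⟩ := hx
      obtain ⟨⟨⟨⟨ha', hb'⟩, -⟩, h2⟩, hn'⟩ := hx'
      have h3 : b - a = b' - a' := by
        have e1 : b - a = c - e := by rw [sub_eq_sub_iff_add_eq_add, ← h1, add_comm]
        have e2 : b' - a' = c - e := by rw [sub_eq_sub_iff_add_eq_add, ← h2, add_comm]
        rw [e1, e2]
      have := hD a ha b hb a' ha' b' hb' h3 (fun h => hn h.symm)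
      simp [this.1, this.2]

open scoped Pointwise in
lemma sumset_bound (D : Finset (ℤ × ℤ)) (hne : D.Nonempty) (r k : ℕ)
    (h : ∀ p ∈ D, ∀ q ∈ D, ((p.1 : ℝ) - q.1) ^ 2 + ((p.2 : ℝ) - q.2) ^ 2 ≤ (r : ℝ) ^ 2) :
    ((D + Finset.Ico (0 : ℤ) k ×ˢ Finset.Ico (0 : ℤ) k).card : ℝ) ≤
      Real.pi / 4 * ((r : ℝ) + 2 * k) ^ 2 := by
  set T := D + Finset.Ico (0 : ℤ) k ×ˢ Finset.Ico (0 : ℤ) k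
  obtain ⟨o, ho, hmin⟩ := D.exists_min_image (fun p => p.1) hne
  set A : Set (ℝ × ℝ) := ⋃ p ∈ D, Icc ((p.1 : ℝ) - o.1) (p.1 - o.1 + k) ×ˢ
    Icc ((p.2 : ℝ) - o.2) (p.2 - o.2 + k) with hAdef
  have hmemA : ∀ a : ℝ × ℝ, a ∈ A ↔ ∃ p ∈ D, (((p.1 : ℝ) - o.1) ≤ a.1 ∧ a.1 ≤ p.1 - o.1 + k) ∧
    (((p.2 : ℝ) - o.2) ≤ a.2 ∧ a.2 ≤ p.2 - o.2 + k) := by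
    intro a; simp only [hAdef, mem_iUnion, mem_prod, mem_Icc, exists_prop]
  have hA : MeasurableSet A :=
    Finset.measurableSet_biUnion _ fun p _ => measurableSet_Icc.prod measurableSet_Icc
  have hvol : volume A ≤ ENNReal.ofReal (Real.pi / 4 * ((r : ℝ) + 2 * k) ^ 2) := by
    apply isodiam A hA _ (by positivity)
    · rw [hmemA]
      exact ⟨o, ho, by simp⟩
    · intro a ha
      obtain ⟨p, hp, ⟨h1, -⟩, -⟩ := (hmemA a).1 ha
      have : (o.1 : ℝ) ≤ p.1 := by exact_mod_cast hmin p hp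
      linarith
    · intro a ha b hb
      obtain ⟨p, hp, ⟨h1, h2⟩, h3, h4⟩ := (hmemA a).1 ha
      obtain ⟨q, hq, ⟨g1, g2⟩, g3, g4⟩ := (hmemA b).1 hb
      have hpq := h p hp q hq
      have hr : (0 : ℝ) ≤ r := by positivity
      have hk : (0 : ℝ) ≤ k := by positivity
      have aux : ∀ x y : ℝ, x ^ 2 ≤ (r : ℝ) ^ 2 → |y - x| ≤ k → y ^ 2 ≤ x ^ 2 + 2 * r * k + k ^ 2 := by
        intro x y hx hy
        have hx' : |x| ≤ r := abs_le_of_sq_le_sq hx hr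
        have e1 : |x * (y - x)| ≤ r * k := by rw [abs_mul]; gcongr
        have e2 : (y - x) ^ 2 ≤ (k : ℝ) ^ 2 := by rw [← sq_abs (y - x)]; gcongr
        nlinarith [le_abs_self (x * (y - x))]
      have a1 := aux ((p.1 : ℝ) - q.1) (a.1 - b.1) (by nlinarith [sq_nonneg ((p.2 : ℝ) - q.2)])
        (abs_le.2 ⟨by linarith, by linarith⟩)
      have a2 := aux ((p.2 : ℝ) - q.2) (a.2 - b.2) (by nlinarith [sq_nonneg ((p.1 : ℝ) - q.1)])
        (abs_le.2 ⟨by linarith, by linarith⟩)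
      nlinarith
  set B : ℤ × ℤ → Set (ℝ × ℝ) := fun t => Ico ((t.1 : ℝ) - o.1) (t.1 - o.1 + 1) ×ˢ
    Ico ((t.2 : ℝ) - o.2) (t.2 - o.2 + 1) with hB
  have hBA : (⋃ t ∈ T, B t) ⊆ A := by
    intro a ha
    simp only [mem_iUnion] at ha
    obtain ⟨t, ht, ha⟩ := ha
    obtain ⟨p, hp, s, hs, rfl⟩ := Finset.mem_add.1 ht
    rw [hmemA]
    refine ⟨p, hp, ?_⟩
    simp only [Finset.mem_product, Finset.mem_Ico] at hs
    simp only [hB, mem_prod, mem_Ico, Prod.fst_add, Prod.snd_add, Int.cast_add] at ha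
    obtain ⟨⟨s1, s2⟩, s3, s4⟩ := hs
    have s1' : (0 : ℝ) ≤ s.1 := by exact_mod_cast s1
    have s3' : (0 : ℝ) ≤ s.2 := by exact_mod_cast s3
    have s2' : (s.1 : ℝ) + 1 ≤ k := by exact_mod_cast s2
    have s4' : (s.2 : ℝ) + 1 ≤ k := by exact_mod_cast s4
    obtain ⟨⟨a1, a2⟩, a3, a4⟩ := ha
    refine ⟨⟨?_, ?_⟩, ?_, ?_⟩ <;> linarith
  have hfl : ∀ t : ℤ × ℤ, ∀ a ∈ B t, t = (⌊a.1 + o.1⌋, ⌊a.2 + o.2⌋) := by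
    intro t a ha
    simp only [hB, mem_prod, mem_Ico] at ha
    obtain ⟨⟨a1, a2⟩, a3, a4⟩ := ha
    ext
    · exact (Int.floor_eq_iff.2 ⟨by linarith, by linarith⟩).symm
    · exact (Int.floor_eq_iff.2 ⟨by linarith, by linarith⟩).symm
  have hvB : volume (⋃ t ∈ T, B t) = T.card := by
    rw [measure_biUnion_finset]
    · have : ∀ t, volume (B t) = 1 := by
        intro t
        simp [hB, Measure.volume_eq_prod, Measure.prod_prod, Real.volume_Ico]
      simp [this]
    · intro t _ t' _ hne
      refine Set.disjoint_left.2 fun a ha ha' => hne ?_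
      rw [hfl t a ha, hfl t' a ha']
    · intro t _
      exact measurableSet_Ico.prod measurableSet_Ico
  have : (T.card : ENNReal) ≤ ENNReal.ofReal (Real.pi / 4 * ((r : ℝ) + 2 * k) ^ 2) := by
    rw [← hvB]; exact (measure_mono hBA).trans hvol
  have h2 := ENNReal.toReal_mono ENNReal.ofReal_ne_top this
  rwa [ENNReal.toReal_ofReal (by positivity), ENNReal.toReal_natCast] at h2

/-- Upper bound for `DD(m,r)`: every distinct difference configuration in ℤ² with pairwise
Euclidean distance at most `r` has at most `(√π/2)·r + C·r^(2/3)` dots. -/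
theorem stmt_11 :
    ∃ C : ℝ, 0 < C ∧ ∀ r : ℕ, 0 < r → ∀ D : Finset (ℤ × ℤ), IsDDC (D : Set (ℤ × ℤ)) →
      (∀ p ∈ D, ∀ q ∈ D, edist2 (toR2 p) (toR2 q) ≤ (r : ℝ)) →
      (D.card : ℝ) ≤ Real.sqrt Real.pi / 2 * (r : ℝ) + C * (r : ℝ) ^ ((2 : ℝ) / 3) := by
  set c := Real.sqrt Real.pi / 2 with hc
  have hcpos : 0 < c := by have := Real.pi_pos; positivity
  have hc2 : c ^ 2 = Real.pi / 4 := by rw [hc, div_pow, Real.sq_sqrt Real.pi_pos.le]; norm_num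
  refine ⟨4 * c + 25 * c ^ 2, by positivity, ?_⟩
  intro r hr D hD hdist
  rcases D.eq_empty_or_nonempty with rfl | hne
  · simp only [Finset.card_empty, Nat.cast_zero]; positivity
  set y : ℝ := (r : ℝ) ^ ((1 : ℝ) / 3) with hy
  have hr1 : (1 : ℝ) ≤ r := by exact_mod_cast hr
  have hy1 : 1 ≤ y := Real.one_le_rpow hr1 (by norm_num)
  have hy3 : (r : ℝ) = y ^ 3 := by
    rw [hy, ← Real.rpow_natCast, ← Real.rpow_mul (by positivity)]; norm_num
  have hy2 : (r : ℝ) ^ ((2 : ℝ) / 3) = y ^ 2 := by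
    rw [hy, ← Real.rpow_natCast, ← Real.rpow_mul (by positivity)]; norm_num
  rw [hy2]
  have hy0 : 0 < y := by linarith
  clear_value c y
  set k := ⌈y ^ 2⌉₊ with hk
  have hk1 : y ^ 2 ≤ k := Nat.le_ceil _
  have hk2 : (k : ℝ) ≤ 2 * y ^ 2 := by
    have := Nat.ceil_lt_add_one (a := y ^ 2) (by positivity)
    nlinarith
  have hN := sumset_bound D hne r k (by
    intro p hp q hq
    have := hdist q hq p hp
    unfold edist2 toR2 at this
    exact (Real.sqrt_le_left (by positivity)).1 this)
  have hE := energy_bound_s11 D (Finset.Ico (0 : ℤ) k ×ˢ Finset.Ico (0 : ℤ) k) hD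
  have hS : (Finset.Ico (0 : ℤ) k ×ˢ Finset.Ico (0 : ℤ) k).card = k ^ 2 := by simp [sq]
  rw [hS] at hE
  open scoped Pointwise in
  generalize (D + Finset.Ico (0 : ℤ) k ×ˢ Finset.Ico (0 : ℤ) k).card = N at hN hE
  generalize D.card = m at hE ⊢
  have hE' : (m : ℝ) ^ 2 * ((k : ℝ) ^ 2) ^ 2 ≤ N * (m * (k : ℝ) ^ 2 + ((k : ℝ) ^ 2) ^ 2) := by
    exact_mod_cast hE
  have hkpos : (0 : ℝ) < k := lt_of_lt_of_le (by positivity) hk1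
  have hE2 : (m : ℝ) ^ 2 * (k : ℝ) ^ 2 ≤ N * (m + (k : ℝ) ^ 2) := by
    have : (0 : ℝ) < (k : ℝ) ^ 2 := by positivity
    refine le_of_mul_le_mul_right ?_ this
    linarith
  have hm0 : (0 : ℝ) ≤ m := by positivity
  set M := c * (y ^ 3 + 4 * y ^ 2) with hM
  have hM0 : 0 < M := by positivity
  have hNM : (N : ℝ) ≤ M ^ 2 := by
    refine hN.trans ?_
    rw [hM, mul_pow, hc2, hy3]
    have := Real.pi_pos
    have h4 : y ^ 3 + 2 * (k : ℝ) ≤ y ^ 3 + 4 * y ^ 2 := by linarith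
    gcongr ?_ * ?_ ^ 2
  have hE3 : (m : ℝ) ^ 2 ≤ M ^ 2 + M ^ 2 * (m / y ^ 4) := by
    have h1 : (m : ℝ) ^ 2 ≤ N * (m / (k : ℝ) ^ 2 + 1) := by
      have : N * (m / (k : ℝ) ^ 2 + 1) = N * (m + (k : ℝ) ^ 2) / (k : ℝ) ^ 2 := by
        field_simp
      rw [this, le_div_iff₀ (by positivity)]
      exact hE2
    have h2 : y ^ 4 ≤ (k : ℝ) ^ 2 := by
      calc y ^ 4 = (y ^ 2) ^ 2 := by ring
        _ ≤ _ := by gcongr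
    calc _ ≤ _ := h1
      _ ≤ M ^ 2 * (m / y ^ 4 + 1) := by gcongr
      _ = _ := by ring
  have hQ : M ^ 2 / y ^ 4 ≤ 25 * c ^ 2 * y ^ 2 := by
    rw [div_le_iff₀ (by positivity), hM]
    have : c * (y ^ 3 + 4 * y ^ 2) ≤ 5 * c * y ^ 3 := by
      have : y ^ 2 ≤ y ^ 3 := pow_le_pow_right₀ hy1 (by norm_num)
      nlinarith
    calc _ ≤ (5 * c * y ^ 3) ^ 2 := by gcongr
      _ = _ := by ring
  have hfin : (m : ℝ) ≤ M + M ^ 2 / y ^ 4 := by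
    by_contra! hlt
    have hQ0 : 0 < M ^ 2 / y ^ 4 := by positivity
    have e : M ^ 2 * (m / y ^ 4) = M ^ 2 / y ^ 4 * m := by ring
    rw [e] at hE3
    nlinarith
  rw [hy3]
  calc (m : ℝ) ≤ M + 25 * c ^ 2 * y ^ 2 := by linarith
    _ = _ := by rw [hM]; ring
end

section
/- There is a constant C > 0 such that for every positive integer r, every distinct difference configuration D contained in the hexagonal lattice Λ = {a·(1,0) + b·(1/2, √3/2) : a, b ∈ ℤ} ⊆ ℝ² whose points have pairwise Euclidean distance at most r satisfies |D| ≤ (√π/(√2·3^(1/4)))·r + C·r^(2/3). -/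
/-- The hexagonal lattice `Λ = {a·(1,0) + b·(1/2, √3/2) : a, b ∈ ℤ}` in ℝ². -/
noncomputable def hexLattice : Set (ℝ × ℝ) :=
  {x | ∃ a b : ℤ, x = ((a : ℝ) + (b : ℝ) / 2, (b : ℝ) * (Real.sqrt 3 / 2))}

open MeasureTheory Set in
/-- Inner radial integral bound. -/
lemma ddc_radial (s : ℝ) (hs : 0 ≤ s) :
    ∫⁻ x in Ioc 0 s, ENNReal.ofReal x = ENNReal.ofReal (s ^ 2 / 2) := by
  rw [← ofReal_integral_eq_lintegral_ofReal]
  · rw [← intervalIntegral.integral_of_le hs, integral_id]; simp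
  · exact (continuous_id.integrableOn_Icc (a := 0) (b := s)).mono_set Ioc_subset_Icc_self
  · filter_upwards [ae_restrict_mem measurableSet_Ioc] with x hx using hx.1.le

/-- suprema of orthogonal radii -/
lemma ddc_sup (M N : Set ℝ) (d : ℝ) (hM : (0 : ℝ) ∈ M) (hN : (0 : ℝ) ∈ N)
    (hMN : ∀ x ∈ M, ∀ y ∈ N, x ^ 2 + y ^ 2 ≤ d ^ 2) :
    BddAbove M ∧ BddAbove N ∧ 0 ≤ sSup M ∧ 0 ≤ sSup N ∧ sSup M ^ 2 + sSup N ^ 2 ≤ d ^ 2 := by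
  have bM : BddAbove M := ⟨|d|, fun x hx => by
    have := hMN x hx 0 hN
    exact (le_abs_self x).trans (sq_le_sq.1 (by linarith))⟩
  have bN : BddAbove N := ⟨|d|, fun x hx => by
    have := hMN 0 hM x hx
    exact (le_abs_self x).trans (sq_le_sq.1 (by linarith))⟩
  have sM : 0 ≤ sSup M := le_csSup bM hM
  have sN : 0 ≤ sSup N := le_csSup bN hN
  refine ⟨bM, bN, sM, sN, ?_⟩
  have h1 : ∀ y ∈ N, sSup M ^ 2 + y ^ 2 ≤ d ^ 2 := by
    intro y hy
    have h0 : 0 ≤ d ^ 2 - y ^ 2 := by have := hMN 0 hM y hy; linarith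
    have : sSup M ≤ √(d ^ 2 - y ^ 2) := csSup_le ⟨0, hM⟩ fun x hx =>
      Real.le_sqrt_of_sq_le (by have := hMN x hx y hy; linarith)
    have := (Real.le_sqrt sM h0).1 this
    linarith
  have h0 : 0 ≤ d ^ 2 - sSup M ^ 2 := by have := h1 0 hN; linarith
  have : sSup N ≤ √(d ^ 2 - sSup M ^ 2) := csSup_le ⟨0, hN⟩ fun x hx =>
      Real.le_sqrt_of_sq_le (by have := h1 x hx; linarith)
  have := (Real.le_sqrt sN h0).1 this
  linarith

open MeasureTheory Set in
lemma ddc_isodiam0 (A : Set (ℝ × ℝ)) (hA : MeasurableSet A) (d : ℝ) (h0 : (0, 0) ∈ A)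
    (hpos : ∀ p ∈ A, 0 ≤ p.1)
    (hd : ∀ p ∈ A, ∀ q ∈ A, (p.1 - q.1) ^ 2 + (p.2 - q.2) ^ 2 ≤ d ^ 2) :
    volume A ≤ ENNReal.ofReal (Real.pi / 4 * d ^ 2) := by
  set F : ℝ × ℝ → ENNReal := fun p =>
    ENNReal.ofReal p.1 * A.indicator 1 (p.1 * Real.cos p.2, p.1 * Real.sin p.2) with hF
  have hFm : Measurable F := by
    refine Measurable.mul (by fun_prop) ?_
    exact (measurable_one.indicator hA).comp (by fun_prop)
  set g : ℝ → ENNReal := fun θ => ∫⁻ x in Ioi (0 : ℝ), F (x, θ) with hg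
  have e1 : volume A = ∫⁻ θ in Ioo (-Real.pi) Real.pi, g θ := by
    rw [← lintegral_indicator_one hA, ← lintegral_comp_polarCoord_symm]
    rw [polarCoord_target, Measure.volume_eq_prod, setLIntegral_prod_symm]
    · rfl
    · exact hFm.aemeasurable
  let M : ℝ → Set ℝ := fun θ => {x | 0 ≤ x ∧ (x * Real.cos θ, x * Real.sin θ) ∈ A}
  have hM0 : ∀ θ, (0 : ℝ) ∈ M θ := fun θ => ⟨le_rfl, by simpa using h0⟩
  have hgM : ∀ θ, BddAbove (M θ) → g θ ≤ ENNReal.ofReal (sSup (M θ) ^ 2 / 2) := by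
    intro θ hb
    rw [← ddc_radial _ (le_csSup hb (hM0 θ)), hg]
    simp only
    rw [← lintegral_indicator measurableSet_Ioi, ← lintegral_indicator measurableSet_Ioc]
    refine lintegral_mono fun x => ?_
    by_cases hx : 0 < x
    · by_cases hxA : (x * Real.cos θ, x * Real.sin θ) ∈ A
      · have : x ≤ sSup (M θ) := le_csSup hb ⟨hx.le, hxA⟩
        simp [indicator, hx, hxA, this, hF]
      · simp [indicator, hxA, hF]
    · simp [indicator, hx]
  have hpair : ∀ θ, g θ + g (θ + Real.pi / 2) ≤ ENNReal.ofReal (d ^ 2 / 2) := by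
    intro θ
    obtain ⟨b1, b2, s1, s2, h⟩ := ddc_sup (M θ) (M (θ + Real.pi / 2)) d (hM0 _) (hM0 _) (by
      rintro x ⟨hx, hxA⟩ y ⟨hy, hyA⟩
      have := hd _ hxA _ hyA
      simp only [Real.cos_add_pi_div_two, Real.sin_add_pi_div_two] at this
      have h1 := Real.sin_sq_add_cos_sq θ
      calc x ^ 2 + y ^ 2 = (x ^ 2 + y ^ 2) * (Real.sin θ ^ 2 + Real.cos θ ^ 2) := by
            rw [h1, mul_one]
        _ ≤ d ^ 2 := by linarith)
    refine (add_le_add (hgM _ b1) (hgM _ b2)).trans ?_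
    rw [← ENNReal.ofReal_add (by positivity) (by positivity)]
    exact ENNReal.ofReal_le_ofReal (by linarith)
  have hzero : ∀ θ, Real.cos θ < 0 → g θ = 0 := by
    intro θ hθ
    rw [hg]
    simp only
    rw [← lintegral_indicator measurableSet_Ioi]
    rw [← lintegral_zero (μ := volume) (α := ℝ)]
    congr 1
    ext x
    by_cases hx : 0 < x
    · have : (x * Real.cos θ, x * Real.sin θ) ∉ A := fun h => by
        have := hpos _ h
        simp only at this
        nlinarith [mul_pos hx (neg_pos.2 hθ)]
      simp [indicator, hF, this]
    · simp [indicator, hx]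
  have hgm : Measurable g := by
    rw [hg]
    exact hFm.lintegral_prod_left'
  have hpi := Real.pi_pos
  have e2 : ∫⁻ θ in Ioo (-Real.pi) Real.pi, g θ ≤
      (∫⁻ θ in Icc (-(Real.pi / 2)) 0, g θ) + ∫⁻ θ in Icc 0 (Real.pi / 2), g θ := by
    rw [← lintegral_indicator measurableSet_Ioo, ← lintegral_indicator measurableSet_Icc,
      ← lintegral_indicator measurableSet_Icc, ← lintegral_add_left
        (hgm.indicator measurableSet_Icc)]
    refine lintegral_mono fun θ => ?_
    by_cases h : θ ∈ Ioo (-Real.pi) Real.pi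
    · rw [indicator_of_mem h]
      by_cases h1 : θ ∈ Icc (-(Real.pi / 2)) 0
      · rw [indicator_of_mem h1]; exact le_self_add
      by_cases h2 : θ ∈ Icc 0 (Real.pi / 2)
      · rw [indicator_of_mem h2]; exact le_add_self
      rw [hzero θ]
      · exact zero_le
      simp only [mem_Icc, not_and, not_le, mem_Ioo] at h h1 h2
      rw [← Real.cos_abs]
      apply Real.cos_neg_of_pi_div_two_lt_of_lt
      · rcases le_total 0 θ with h3 | h3
        · rw [abs_of_nonneg h3]; exact h2 h3
        · rw [abs_of_nonpos h3]; by_contra h4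
          have := h1 (by linarith); linarith
      · have := abs_lt.2 h
        linarith
    · rw [indicator_of_notMem h]; exact zero_le
  have e3 : ∫⁻ θ in Icc 0 (Real.pi / 2), g θ =
      ∫⁻ θ in Icc (-(Real.pi / 2)) 0, g (θ + Real.pi / 2) := by
    rw [← (measurePreserving_add_right volume (Real.pi / 2)).setLIntegral_comp_preimage
      measurableSet_Icc hgm]
    congr 2
    ext x
    simp only [mem_preimage, mem_Icc]
    constructor <;> rintro ⟨h1, h2⟩ <;> constructor <;> linarith
  calc volume A ≤ _ := e1.le.trans e2
    _ = ∫⁻ θ in Icc (-(Real.pi / 2)) 0, (g θ + g (θ + Real.pi / 2)) := by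
      rw [e3, lintegral_add_left hgm]
    _ ≤ ∫⁻ θ in Icc (-(Real.pi / 2)) 0, ENNReal.ofReal (d ^ 2 / 2) :=
      lintegral_mono fun θ => hpair θ
    _ = ENNReal.ofReal (Real.pi / 4 * d ^ 2) := by
      rw [setLIntegral_const, Real.volume_Icc, ← ENNReal.ofReal_mul (by positivity)]
      congr 1; ring

open MeasureTheory Set in
lemma ddc_isodiam (A : Set (ℝ × ℝ)) (hA : MeasurableSet A) (d : ℝ) (z : ℝ × ℝ) (h0 : z ∈ A)
    (hpos : ∀ p ∈ A, z.1 ≤ p.1)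
    (hd : ∀ p ∈ A, ∀ q ∈ A, (p.1 - q.1) ^ 2 + (p.2 - q.2) ^ 2 ≤ d ^ 2) :
    volume A ≤ ENNReal.ofReal (Real.pi / 4 * d ^ 2) := by
  rw [← measure_preimage_add_right volume z A]
  apply ddc_isodiam0
  · exact (measurable_add_const z) hA
  · rw [mem_preimage, show ((0, 0) : ℝ × ℝ) = 0 from rfl, zero_add]; exact h0
  · intro p hp
    have := hpos _ hp
    simpa using this
  · intro p hp q hq
    have := hd _ hp _ hq
    simpa using this

open Pointwise in
lemma ddc_energy {G : Type*} [AddCommGroup G] [DecidableEq G] (E W : Finset G)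
    (hE : ∀ p₁ ∈ E, ∀ p₂ ∈ E, ∀ q₁ ∈ E, ∀ q₂ ∈ E,
      p₂ - p₁ = q₂ - q₁ → p₂ ≠ p₁ → p₁ = q₁ ∧ p₂ = q₂) :
    E.card ^ 2 * W.card ^ 2 ≤ (E + W).card * (E.card * W.card + W.card ^ 2) := by
  refine (Finset.le_card_add_mul_addEnergy E W).trans (Nat.mul_le_mul_left _ ?_)
  unfold Finset.addEnergy
  rw [← Finset.card_filter_add_card_filter_not (fun x : (G × G) × G × G => x.1.1 = x.1.2)]
  refine add_le_add ?_ ?_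
  · rw [← Finset.card_product]
    refine Finset.card_le_card_of_injOn (fun x => (x.1.1, x.2.1)) ?_ ?_
    · rintro ⟨⟨a, b⟩, c, d⟩ h
      simp at h ⊢
      tauto
    · rintro ⟨⟨a, b⟩, c, d⟩ h ⟨⟨a', b'⟩, c', d'⟩ h' heq
      simp at h h' heq ⊢
      obtain ⟨⟨-, h1⟩, rfl⟩ := h
      obtain ⟨⟨-, h2⟩, rfl⟩ := h'
      obtain ⟨rfl, rfl⟩ := heq
      simp at h1 h2
      subst h1; subst h2
      simp
  · rw [sq, ← Finset.card_product]
    refine Finset.card_le_card_of_injOn (fun x => (x.2.1, x.2.2)) ?_ ?_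
    · rintro ⟨⟨a, b⟩, c, d⟩ h
      simp at h ⊢
      tauto
    · rintro ⟨⟨a, b⟩, c, d⟩ h ⟨⟨a', b'⟩, c', d'⟩ h' heq
      simp at h h' heq ⊢
      obtain ⟨⟨⟨⟨ha, hb⟩, -⟩, h1⟩, hne⟩ := h
      obtain ⟨⟨⟨⟨ha', hb'⟩, -⟩, h2⟩, hne'⟩ := h'
      obtain ⟨rfl, rfl⟩ := heq
      have := hE b hb a ha b' hb' a' ha' (by
        rw [sub_eq_sub_iff_add_eq_add]
        have e : (a + b') + (c + d) = (a' + b) + (c + d) := by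
          calc _ = (a + c) + (b' + d) := by abel
            _ = (b + d) + (a' + c) := by rw [h1, h2]
            _ = _ := by abel
        exact add_right_cancel e) hne
      simp [this]

/-- Embedding of integer coordinates into the hexagonal lattice. -/
noncomputable def ddcPhi (c : ℤ × ℤ) : ℝ × ℝ :=
  ((c.1 : ℝ) + (c.2 : ℝ) / 2, (c.2 : ℝ) * (Real.sqrt 3 / 2))

lemma ddcPhi_inj : Function.Injective ddcPhi := by
  rintro ⟨a, b⟩ ⟨c, d⟩ h
  simp only [ddcPhi, Prod.mk.injEq] at h
  obtain ⟨h1, h2⟩ := h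
  have h3 : (0 : ℝ) < √3 / 2 := by positivity
  have h4 := mul_right_cancel₀ h3.ne' h2
  rw [h4] at h1
  have h5 : (a : ℝ) = c := by linarith
  exact Prod.ext (by exact_mod_cast h5) (by exact_mod_cast h4)

/-- rectangular fundamental cell -/
noncomputable def ddcCell (c : ℤ × ℤ) : Set (ℝ × ℝ) :=
  Set.Ico (ddcPhi c).1 ((ddcPhi c).1 + 1) ×ˢ Set.Ico (ddcPhi c).2 ((ddcPhi c).2 + √3 / 2)

lemma ddcCell_disj (c d : ℤ × ℤ) (x : ℝ × ℝ) (hc : x ∈ ddcCell c) (hd : x ∈ ddcCell d) :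
    c = d := by
  obtain ⟨⟨a1, a2⟩, a3, a4⟩ := hc
  obtain ⟨⟨b1, b2⟩, b3, b4⟩ := hd
  simp only [ddcPhi] at *
  have h3 : (0 : ℝ) < √3 / 2 := by positivity
  have k1 : (c.2 : ℝ) < d.2 + 1 := lt_of_mul_lt_mul_right (by linarith) h3.le
  have k2 : (d.2 : ℝ) < c.2 + 1 := lt_of_mul_lt_mul_right (by linarith) h3.le
  have k3 : c.2 = d.2 := by
    have k1' : c.2 < d.2 + 1 := by exact_mod_cast k1
    have k2' : d.2 < c.2 + 1 := by exact_mod_cast k2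
    omega
  rw [k3] at a1 a2
  have m1 : (c.1 : ℝ) < d.1 + 1 := by linarith
  have m2 : (d.1 : ℝ) < c.1 + 1 := by linarith
  have m3 : c.1 = d.1 := by
    have k1' : c.1 < d.1 + 1 := by exact_mod_cast m1
    have k2' : d.1 < c.1 + 1 := by exact_mod_cast m2
    omega
  exact Prod.ext m3 k3

open MeasureTheory in
lemma ddcCell_vol (S : Finset (ℤ × ℤ)) :
    volume (⋃ c ∈ S, ddcCell c) = ENNReal.ofReal (S.card * (√3 / 2)) := by
  rw [measure_biUnion_finset]
  · have : ∀ c ∈ S, volume (ddcCell c) = ENNReal.ofReal (√3 / 2) := by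
      intro c _
      rw [ddcCell, Measure.volume_eq_prod, Measure.prod_prod, Real.volume_Ico, Real.volume_Ico]
      simp
    rw [Finset.sum_congr rfl this, Finset.sum_const, nsmul_eq_mul,
      ENNReal.ofReal_mul (by positivity), ENNReal.ofReal_natCast]
  · intro c _ d _ hcd
    exact Set.disjoint_left.2 fun x hx hy => hcd (ddcCell_disj c d x hx hy)
  · intro c _
    exact measurableSet_Ico.prod measurableSet_Ico

lemma ddc_vec (a b u v r k : ℝ) (hr : 0 ≤ r) (hk : 0 ≤ k) (h1 : a ^ 2 + b ^ 2 ≤ r ^ 2)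
    (h2 : u ^ 2 + v ^ 2 ≤ 4 * k ^ 2) : (a + u) ^ 2 + (b + v) ^ 2 ≤ (r + 2 * k) ^ 2 := by
  have h3 : (a * u + b * v) ^ 2 ≤ (2 * r * k) ^ 2 := by
    calc (a * u + b * v) ^ 2 ≤ (a ^ 2 + b ^ 2) * (u ^ 2 + v ^ 2) := by
          nlinarith [sq_nonneg (a * v - b * u)]
      _ ≤ r ^ 2 * (4 * k ^ 2) := by gcongr
      _ = _ := by ring
  have h4 := abs_le_of_sq_le_sq h3 (by positivity)
  nlinarith [le_of_abs_le h4]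

open Pointwise in
lemma ddc_area (E : Finset (ℤ × ℤ)) (hE : E.Nonempty) (r : ℝ) (hr : 0 ≤ r) (k : ℕ) (hk : 0 < k)
    (hd : ∀ p ∈ E, ∀ q ∈ E, ((ddcPhi p).1 - (ddcPhi q).1) ^ 2 +
      ((ddcPhi p).2 - (ddcPhi q).2) ^ 2 ≤ r ^ 2) :
    ((E + Finset.Ico (0 : ℤ) k ×ˢ Finset.Ico (0 : ℤ) k).card : ℝ) * (√3 / 2) ≤
      Real.pi / 4 * (r + 2 * k) ^ 2 := by
  set W := Finset.Ico (0 : ℤ) k ×ˢ Finset.Ico (0 : ℤ) k with hW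
  set S := E + W with hS
  have hWn : W.Nonempty := ⟨(0, 0), by simp [hW, hk]⟩
  have hSn : S.Nonempty := hE.add hWn
  have h3 : (0 : ℝ) < √3 / 2 := by positivity
  obtain ⟨z, hz, hzm⟩ := S.exists_min_image (fun c => (ddcPhi c).1) hSn
  rw [← ENNReal.ofReal_le_ofReal_iff (by positivity), ← ddcCell_vol]
  have key : ∀ x ∈ ⋃ c ∈ S, ddcCell c, ∃ p ∈ E, ∃ u v : ℝ, 0 ≤ u ∧ u ≤ 3 / 2 * k ∧ 0 ≤ v ∧
      v ≤ k * (√3 / 2) ∧ x = ((ddcPhi p).1 + u, (ddcPhi p).2 + v) := by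
    intro x hx
    simp only [Set.mem_iUnion, exists_prop] at hx
    obtain ⟨c, hc, ⟨h1, h2⟩, h4, h5⟩ := hx
    obtain ⟨p, hp, w, hw, rfl⟩ := Finset.mem_add.1 hc
    simp only [hW, Finset.mem_product, Finset.mem_Ico] at hw
    obtain ⟨⟨w1, w2⟩, w3, w4⟩ := hw
    have w1' : (0 : ℝ) ≤ w.1 := by exact_mod_cast w1
    have w3' : (0 : ℝ) ≤ w.2 := by exact_mod_cast w3
    have w2' : (w.1 : ℝ) + 1 ≤ k := by exact_mod_cast w2
    have w4' : (w.2 : ℝ) + 1 ≤ k := by exact_mod_cast w4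
    have w5 : ((w.2 : ℝ) + 1) * (√3 / 2) ≤ k * (√3 / 2) := by gcongr
    have w6 : 0 ≤ (w.2 : ℝ) * (√3 / 2) := by positivity
    simp only [ddcPhi, Prod.fst_add, Prod.snd_add, Int.cast_add] at *
    refine ⟨p, hp, x.1 - (p.1 + p.2 / 2), x.2 - p.2 * (√3 / 2), ?_, ?_, ?_, ?_, ?_⟩
    · linarith
    · linarith
    · linarith
    · linarith
    · ext <;> simp
  apply ddc_isodiam _ _ _ (ddcPhi z)
  · simp only [Set.mem_iUnion, exists_prop]
    exact ⟨z, hz, ⟨le_rfl, by linarith⟩, le_rfl, by linarith⟩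
  · intro x hx
    simp only [Set.mem_iUnion, exists_prop] at hx
    obtain ⟨c, hc, ⟨h1, h2⟩, -⟩ := hx
    exact (hzm c hc).trans h1
  · intro x hx y hy
    obtain ⟨p, hp, u, v, u1, u2, v1, v2, rfl⟩ := key x hx
    obtain ⟨q, hq, u', v', u1', u2', v1', v2', rfl⟩ := key y hy
    have := ddc_vec ((ddcPhi p).1 - (ddcPhi q).1) ((ddcPhi p).2 - (ddcPhi q).2) (u - u') (v - v')
      r k hr (by positivity) (hd p hp q hq) (by
        have a1 : (u - u') ^ 2 ≤ (3 / 2 * (k : ℝ)) ^ 2 :=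
          sq_le_sq' (by linarith) (by linarith)
        have a2 : (v - v') ^ 2 ≤ (k * (√3 / 2)) ^ 2 :=
          sq_le_sq' (by linarith) (by linarith)
        have a3 : (√3) ^ 2 = 3 := Real.sq_sqrt (by norm_num)
        have a4 : (k * (√3 / 2)) ^ 2 = k ^ 2 * (3 / 4 : ℝ) := by
          rw [mul_pow, div_pow, a3]; norm_num
        nlinarith [sq_nonneg (k : ℝ)])
    calc _ = _ := by ring
      _ ≤ _ := this
  · exact Finset.measurableSet_biUnion _ fun c _ => measurableSet_Ico.prod measurableSet_Ico

lemma ddc_solve (m s a : ℝ) (hs : 0 ≤ s) (ha : 0 ≤ a) (h : m ^ 2 ≤ a * m + s) :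
    m ≤ √s + a := by
  by_contra hc
  push Not at hc
  have h1 := Real.sq_sqrt hs
  have h2 := Real.sqrt_nonneg s
  nlinarith

lemma ddc_const : √Real.pi / (√2 * (3 : ℝ) ^ ((1 : ℝ) / 4)) = √(Real.pi / (2 * √3)) := by
  rw [Real.sqrt_div' _ (by positivity), Real.sqrt_mul (by norm_num)]
  congr 2
  rw [Real.sqrt_eq_rpow, Real.sqrt_eq_rpow, ← Real.rpow_mul (by norm_num)]
  norm_num

theorem stmt_13 :
    ∃ C : ℝ, 0 < C ∧ ∀ r : ℕ, 0 < r → ∀ D : Finset (ℝ × ℝ),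
      (D : Set (ℝ × ℝ)) ⊆ hexLattice → IsDDC (D : Set (ℝ × ℝ)) →
      (∀ p ∈ D, ∀ q ∈ D, edist2 p q ≤ (r : ℝ)) →
      (D.card : ℝ) ≤ Real.sqrt Real.pi / (Real.sqrt 2 * (3 : ℝ) ^ ((1 : ℝ) / 4)) * (r : ℝ) +
        C * (r : ℝ) ^ ((2 : ℝ) / 3) := by
  classical
  rw [ddc_const]
  set K := √(Real.pi / (2 * √3)) with hK
  have hK0 : 0 < K := Real.sqrt_pos.2 (by positivity)
  have hK2 : K ^ 2 = Real.pi / (2 * √3) := Real.sq_sqrt (by positivity)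
  refine ⟨4 * K + 25 * K ^ 2, by positivity, ?_⟩
  intro r hr D hD hDDC hdist
  set R := (r : ℝ) ^ ((2 : ℝ) / 3) with hR
  have hr1 : (1 : ℝ) ≤ r := by exact_mod_cast hr
  have hR1 : 1 ≤ R := Real.one_le_rpow hr1 (by norm_num)
  have hRr : R ≤ r := by
    calc R ≤ (r : ℝ) ^ (1 : ℝ) := Real.rpow_le_rpow_of_exponent_le hr1 (by norm_num)
      _ = r := Real.rpow_one _
  have hR3 : R ^ 3 = (r : ℝ) ^ 2 := by
    rw [hR, ← Real.rpow_natCast, ← Real.rpow_mul (by positivity), ← Real.rpow_natCast]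
    norm_num
  rcases D.eq_empty_or_nonempty with rfl | hDn
  · simp only [Finset.card_empty, Nat.cast_zero]; positivity
  set E := D.preimage ddcPhi ddcPhi_inj.injOn with hEdef
  have hED : E.image ddcPhi = D := by
    rw [hEdef, Finset.image_preimage, Finset.filter_true_of_mem]
    intro x hx
    obtain ⟨a, b, rfl⟩ := hD hx
    exact ⟨(a, b), rfl⟩
  have hcard : D.card = E.card := by
    rw [← hED, Finset.card_image_of_injective _ ddcPhi_inj]
  have hEn : E.Nonempty := by
    rw [← Finset.card_pos, ← hcard, Finset.card_pos]; exact hDn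
  have hmem : ∀ p ∈ E, ddcPhi p ∈ D := fun p hp => Finset.mem_preimage.1 hp
  have hsub : ∀ p q, ddcPhi (p - q) = ddcPhi p - ddcPhi q := by
    intro p q
    ext <;> simp [ddcPhi] <;> ring
  set k := ⌈R⌉₊ with hk
  have hk1 : R ≤ k := Nat.le_ceil R
  have hk2 : (k : ℝ) ≤ 2 * R := by
    have := Nat.ceil_lt_add_one (show 0 ≤ R by linarith)
    linarith
  have hkpos : 0 < k := Nat.ceil_pos.2 (by linarith)
  have hkpos' : (0 : ℝ) < k := by exact_mod_cast hkpos
  have harea := ddc_area E hEn r (by positivity) k hkpos (by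
    intro p hp q hq
    have := hdist _ (hmem q hq) _ (hmem p hp)
    rw [edist2, Real.sqrt_le_left (by positivity)] at this
    exact this)
  have hen := ddc_energy E (Finset.Ico (0 : ℤ) k ×ˢ Finset.Ico (0 : ℤ) k) (by
    intro p1 h1 p2 h2 q1 h3 q2 h4 h hne
    have := hDDC _ (hmem p1 h1) _ (hmem p2 h2) _ (hmem q1 h3) _ (hmem q2 h4)
      (by rw [← hsub, ← hsub, h]) (fun h => hne (ddcPhi_inj h))
    exact ⟨ddcPhi_inj this.1, ddcPhi_inj this.2⟩)
  open Pointwise in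
  set s := (E + Finset.Ico (0 : ℤ) k ×ˢ Finset.Ico (0 : ℤ) k).card with hs
  have hWc : (Finset.Ico (0 : ℤ) k ×ˢ Finset.Ico (0 : ℤ) k).card = k ^ 2 := by
    simp [Finset.card_product, sq]
  rw [hWc, ← hcard] at hen
  have hen' : (D.card : ℝ) ^ 2 * ((k : ℝ) ^ 2) ^ 2 ≤
      s * (D.card * (k : ℝ) ^ 2 + ((k : ℝ) ^ 2) ^ 2) := by exact_mod_cast hen
  have hs0 : (0 : ℝ) ≤ s := by positivity
  have h1 : (D.card : ℝ) ^ 2 ≤ s / k ^ 2 * D.card + s := by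
    have hk4 : (0 : ℝ) < ((k : ℝ) ^ 2) ^ 2 := by positivity
    refine le_of_mul_le_mul_right (hen'.trans_eq ?_) hk4
    field_simp
  have h2 := ddc_solve _ _ _ hs0 (by positivity) h1
  have h3 : (s : ℝ) ≤ (K * (r + 2 * k)) ^ 2 := by
    rw [mul_pow, hK2]
    have h3 : (0 : ℝ) < √3 / 2 := by positivity
    refine le_of_mul_le_mul_right (harea.trans_eq ?_) h3
    field_simp
    ring
  have h4 : √(s : ℝ) ≤ K * (r + 2 * k) := by
    rw [Real.sqrt_le_left (by positivity)]; exact h3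
  have h5 : (s : ℝ) / k ^ 2 ≤ 25 * K ^ 2 * R := by
    rw [div_le_iff₀ (by positivity)]
    calc (s : ℝ) ≤ (K * (r + 2 * k)) ^ 2 := h3
      _ ≤ (K * (5 * r)) ^ 2 := by gcongr; linarith
      _ = 25 * K ^ 2 * R ^ 3 := by rw [hR3]; ring
      _ = 25 * K ^ 2 * R * R ^ 2 := by ring
      _ ≤ 25 * K ^ 2 * R * k ^ 2 := by gcongr
  calc (D.card : ℝ) ≤ K * (r + 2 * k) + 25 * K ^ 2 * R := by linarith
    _ ≤ K * (r + 2 * (2 * R)) + 25 * K ^ 2 * R := by gcongr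
    _ = _ := by ring
end

section
/- Let p be a prime and let α be a primitive root modulo p. Let A = {(i,j) ∈ ℤ² : α^i ≡ j (mod p)} (where α^i is computed in the group of units of ℤ/pℤ, so that negative exponents are allowed). Then: (1) for all (i,j) ∈ ℤ², (i,j) ∈ A if and only if (i+p−1, j) ∈ A, if and only if (i, j+p) ∈ A; (2) for all i₀, j₀ ∈ ℤ, the set A ∩ ({i₀, i₀+1, …, i₀+p−2} × {j₀, j₀+1, …, j₀+p−1}) contains exactly p−1 points and is a distinct difference configuration. -/
/-- The Periodic Welch construction: for a prime `p` and a primitive root `α` mod `p`, the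
array `A = {(i,j) : α^i ≡ j (mod p)}` is periodic with period `(p−1, p)`, and every
`p × (p−1)` window contains exactly `p−1` dots and is a distinct difference
configuration. -/
theorem stmt_14 (p : ℕ) (hp : p.Prime) (α : (ZMod p)ˣ)
    (hα : ∀ u : (ZMod p)ˣ, u ∈ Subgroup.zpowers α) :
    let A : Set (ℤ × ℤ) := {v | ((α ^ v.1 : (ZMod p)ˣ) : ZMod p) = (v.2 : ZMod p)}
    (∀ i j : ℤ, ((i, j) ∈ A ↔ (i + (p : ℤ) - 1, j) ∈ A) ∧
      ((i, j) ∈ A ↔ (i, j + (p : ℤ)) ∈ A)) ∧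
    ∀ i₀ j₀ : ℤ,
      {v ∈ A | i₀ ≤ v.1 ∧ v.1 ≤ i₀ + (p : ℤ) - 2 ∧ j₀ ≤ v.2 ∧ v.2 ≤ j₀ + (p : ℤ) - 1}.ncard
        = p - 1 ∧
      IsDDC {v ∈ A | i₀ ≤ v.1 ∧ v.1 ≤ i₀ + (p : ℤ) - 2 ∧ j₀ ≤ v.2 ∧ v.2 ≤ j₀ + (p : ℤ) - 1} := by
  intro A
  have : Fact p.Prime := ⟨hp⟩
  have hp2 := hp.two_le
  have hord : orderOf α = p - 1 := by
    rw [orderOf_eq_card_of_forall_mem_zpowers hα, Nat.card_eq_fintype_card,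
      ZMod.card_units]
  have hcast : ((p - 1 : ℕ) : ℤ) = (p : ℤ) - 1 := by omega
  have hper : α ^ ((p : ℤ) - 1) = 1 := by
    rw [← hcast, ← hord, zpow_natCast, pow_orderOf_eq_one]
  have hone : ∀ d : ℤ, α ^ d = 1 → |d| < (p : ℤ) - 1 → d = 0 := by
    intro d hd hlt
    have h := orderOf_dvd_iff_zpow_eq_one.mpr hd
    rw [hord, hcast] at h
    exact Int.eq_zero_of_abs_lt_dvd h hlt
  have hinj : ∀ a b : ℤ, α ^ a = α ^ b → |a - b| < (p : ℤ) - 1 → a = b := by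
    intro a b hab hlt
    have := hone (a - b) (by rw [zpow_sub, hab, mul_inv_cancel]) hlt
    omega
  have hj : ∀ a b : ℤ, (a : ZMod p) = (b : ZMod p) → |a - b| < (p : ℤ) → a = b := by
    intro a b hab hlt
    have h : (p : ℤ) ∣ a - b := by
      rw [← ZMod.intCast_zmod_eq_zero_iff_dvd] 
      push_cast
      rw [hab, sub_self]
    have := Int.eq_zero_of_abs_lt_dvd h hlt
    omega
  refine ⟨fun i j => ⟨?_, ?_⟩, fun i₀ j₀ => ⟨?_, ?_⟩⟩
  · simp only [A, Set.mem_setOf_eq]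
    rw [add_sub_assoc, zpow_add, hper, mul_one]
  · simp [A]
  · have hset : {v ∈ A | i₀ ≤ v.1 ∧ v.1 ≤ i₀ + (p : ℤ) - 2 ∧ j₀ ≤ v.2 ∧
        v.2 ≤ j₀ + (p : ℤ) - 1} =
        Set.image (fun i : ℤ => (i, j₀ + ((((α ^ i : (ZMod p)ˣ) : ZMod p) - (j₀ : ZMod p)).val : ℤ)))
          (Finset.Icc i₀ (i₀ + (p : ℤ) - 2) : Set ℤ) := by
      ext ⟨i, j⟩
      have hv := ZMod.val_lt (((α ^ i : (ZMod p)ˣ) : ZMod p) - (j₀ : ZMod p))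
      have hc : ((j₀ + ((((α ^ i : (ZMod p)ˣ) : ZMod p) - (j₀ : ZMod p)).val : ℤ) : ℤ) : ZMod p)
          = ((α ^ i : (ZMod p)ˣ) : ZMod p) := by
        rw [Int.cast_add, Int.cast_natCast, ZMod.natCast_zmod_val]
        ring
      simp only [A, Set.mem_setOf_eq, Set.mem_image, Finset.coe_Icc, Set.mem_Icc, Prod.mk.injEq]
      constructor
      · rintro ⟨h, h1, h2, h3, h4⟩
        refine ⟨i, ⟨h1, h2⟩, rfl, ?_⟩
        apply hj _ _ (hc.trans h)
        rw [abs_lt]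
        constructor <;> omega
      · rintro ⟨i', ⟨h1, h2⟩, rfl, rfl⟩
        exact ⟨hc.symm, h1, h2, by omega, by omega⟩
    rw [hset, Set.ncard_image_of_injective _ (fun a b h => (Prod.mk.inj h).1),
      Set.ncard_coe_finset, Int.card_Icc]
    omega
  · rintro ⟨a, b⟩ ⟨h1, h1a, h1b, h1c, h1d⟩ ⟨c, d⟩ ⟨h2, h2a, h2b, h2c, h2d⟩
      ⟨e, f⟩ ⟨h3, h3a, h3b, h3c, h3d⟩ ⟨g, h⟩ ⟨h4, h4a, h4b, h4c, h4d⟩ heq hne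
    simp only [A, Set.mem_setOf_eq, Prod.mk_sub_mk, Prod.mk.injEq, ne_eq] at *
    obtain ⟨hx, hy⟩ := heq
    have hc : c = a + (c - a) := by ring
    have hg : g = e + (c - a) := by omega
    by_cases h0 : α ^ (c - a) = 1
    · have hca := hone _ h0 (by rw [abs_lt]; constructor <;> omega)
      have hca' : c = a := by omega
      subst hca'
      exact absurd ⟨rfl, hj d b (h2.symm.trans h1) (by rw [abs_lt]; constructor <;> omega)⟩ hne
    · have hy' : (d : ZMod p) - b = h - f := by exact_mod_cast congrArg (Int.cast : ℤ → ZMod p) hy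
      rw [hc, zpow_add, Units.val_mul] at h2
      rw [hg, zpow_add, Units.val_mul] at h4
      have hne1 : ((α ^ (c - a) : (ZMod p)ˣ) : ZMod p) - 1 ≠ 0 := by
        intro hh
        exact h0 (Units.ext (sub_eq_zero.mp hh))
      have hm : ((α ^ a : (ZMod p)ˣ) : ZMod p) = ((α ^ e : (ZMod p)ˣ) : ZMod p) := by
        apply mul_right_cancel₀ hne1
        linear_combination h2 - h4 - h1 + h3 + hy'
      have hae := hinj a e (Units.ext hm) (by rw [abs_lt]; constructor <;> omega)
      have hbf := hj b f (h1.symm.trans (hm.trans h3)) (by rw [abs_lt]; constructor <;> omega)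
      omega
end

section
/- Let q ≥ 3 be a prime power and let α and β be primitive elements of the finite field GF(q). Let A = {(i,j) ∈ ℤ² : α^i + β^j = 1} (where α^i and β^j are computed in the multiplicative group GF(q)ˣ, so that negative exponents are allowed). Then: (1) for all (i,j) ∈ ℤ², (i,j) ∈ A if and only if (i+q−1, j) ∈ A, if and only if (i, j+q−1) ∈ A; (2) for all i₀, j₀ ∈ ℤ, the set A ∩ ({i₀, i₀+1, …, i₀+q−2} × {j₀, j₀+1, …, j₀+q−2}) contains exactly q−2 points and is a distinct difference configuration. -/
theorem gol_order {q : ℕ} {F : Type} [Field F] [Fintype F]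
    (hcard : Fintype.card F = q) {g : Fˣ} (hg : ∀ u : Fˣ, u ∈ Subgroup.zpowers g) :
    orderOf g = q - 1 := by
  classical
  rw [orderOf_eq_card_of_forall_mem_zpowers hg, Nat.card_eq_fintype_card, Fintype.card_units, hcard]

theorem gol_inj {q : ℕ} (hq : 3 ≤ q) {F : Type} [Field F] [Fintype F]
    (hcard : Fintype.card F = q) {g : Fˣ} (hg : ∀ u : Fˣ, u ∈ Subgroup.zpowers g)
    {i₀ i j : ℤ} (h1 : i₀ ≤ i) (h2 : i ≤ i₀ + (q : ℤ) - 2) (h3 : i₀ ≤ j)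
    (h4 : j ≤ i₀ + (q : ℤ) - 2) (h : g ^ i = g ^ j) : i = j := by
  have h5 := orderOf_dvd_sub_iff_zpow_eq_zpow.mpr h
  rw [gol_order hcard hg] at h5
  have h6 := Int.eq_zero_of_abs_lt_dvd h5 (by rw [abs_lt]; omega)
  omega

theorem gol_surj {q : ℕ} (hq : 3 ≤ q) {F : Type} [Field F] [Fintype F]
    (hcard : Fintype.card F = q) {g : Fˣ} (hg : ∀ u : Fˣ, u ∈ Subgroup.zpowers g)
    (i₀ : ℤ) (u : Fˣ) : ∃ i : ℤ, i₀ ≤ i ∧ i ≤ i₀ + (q : ℤ) - 2 ∧ g ^ i = u := by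
  obtain ⟨k, rfl⟩ := Subgroup.mem_zpowers_iff.mp (hg u)
  have e : ((q - 1 : ℕ) : ℤ) = q - 1 := by omega
  have a := Int.emod_nonneg (k - i₀) (b := (q : ℤ) - 1) (by omega)
  have b := Int.emod_lt_of_pos (k - i₀) (b := (q : ℤ) - 1) (by omega)
  refine ⟨i₀ + (k - i₀) % ((q : ℤ) - 1), by omega, by omega, ?_⟩
  rw [← orderOf_dvd_sub_iff_zpow_eq_zpow, gol_order hcard hg, e]
  refine ⟨-((k - i₀) / ((q : ℤ) - 1)), ?_⟩
  have := Int.emod_add_mul_ediv (k - i₀) ((q : ℤ) - 1)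
  linarith

theorem gol_period {q : ℕ} (hq : 3 ≤ q) {F : Type} [Field F] [Fintype F]
    (hcard : Fintype.card F = q) {g : Fˣ} (hg : ∀ u : Fˣ, u ∈ Subgroup.zpowers g)
    (i : ℤ) : g ^ (i + (q : ℤ) - 1) = g ^ i := by
  rw [← orderOf_dvd_sub_iff_zpow_eq_zpow, gol_order hcard hg]
  exact ⟨1, by omega⟩

/-- The Periodic Golomb construction: for a finite field `F` of order `q ≥ 3` with primitive
elements `α, β`, the array `A = {(i,j) : α^i + β^j = 1}` is periodic with period
`(q−1, q−1)`, and every `(q−1) × (q−1)` window contains exactly `q−2` dots and is a distinct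
difference configuration. -/
theorem stmt_15 (q : ℕ) (hq : 3 ≤ q) (F : Type) [Field F] [Fintype F]
    (hcard : Fintype.card F = q) (α β : Fˣ)
    (hα : ∀ u : Fˣ, u ∈ Subgroup.zpowers α) (hβ : ∀ u : Fˣ, u ∈ Subgroup.zpowers β) :
    let A : Set (ℤ × ℤ) := {v | ((α ^ v.1 : Fˣ) : F) + ((β ^ v.2 : Fˣ) : F) = 1}
    (∀ i j : ℤ, ((i, j) ∈ A ↔ (i + (q : ℤ) - 1, j) ∈ A) ∧
      ((i, j) ∈ A ↔ (i, j + (q : ℤ) - 1) ∈ A)) ∧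
    ∀ i₀ j₀ : ℤ,
      {v ∈ A | i₀ ≤ v.1 ∧ v.1 ≤ i₀ + (q : ℤ) - 2 ∧ j₀ ≤ v.2 ∧ v.2 ≤ j₀ + (q : ℤ) - 2}.ncard
        = q - 2 ∧
      IsDDC {v ∈ A | i₀ ≤ v.1 ∧ v.1 ≤ i₀ + (q : ℤ) - 2 ∧ j₀ ≤ v.2 ∧ v.2 ≤ j₀ + (q : ℤ) - 2} := by
  intro A
  refine ⟨fun i j => ⟨?_, ?_⟩, fun i₀ j₀ => ⟨?_, ?_⟩⟩
  · simp only [A, Set.mem_setOf_eq, gol_period hq hcard hα]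
  · simp only [A, Set.mem_setOf_eq, gol_period hq hcard hβ]
  · classical
    have hinj : Set.InjOn (fun v : ℤ × ℤ => ((α ^ v.1 : Fˣ) : F)) {v ∈ A | i₀ ≤ v.1 ∧
        v.1 ≤ i₀ + (q : ℤ) - 2 ∧ j₀ ≤ v.2 ∧ v.2 ≤ j₀ + (q : ℤ) - 2} := by
      rintro ⟨i, j⟩ ⟨hA, h1, h2, h3, h4⟩ ⟨k, l⟩ ⟨hA', h1', h2', h3', h4'⟩ h
      simp only [A, Set.mem_setOf_eq] at *
      have hb : ((β ^ j : Fˣ) : F) = ((β ^ l : Fˣ) : F) := by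
        rw [h] at hA
        exact add_left_cancel (hA.trans hA'.symm)
      rw [gol_inj hq hcard hα h1 h2 h1' h2' (Units.ext h),
        gol_inj hq hcard hβ h3 h4 h3' h4' (Units.ext hb)]
    rw [← Set.ncard_image_of_injOn hinj]
    have him : (fun v : ℤ × ℤ => ((α ^ v.1 : Fˣ) : F)) '' {v ∈ A | i₀ ≤ v.1 ∧
        v.1 ≤ i₀ + (q : ℤ) - 2 ∧ j₀ ≤ v.2 ∧ v.2 ≤ j₀ + (q : ℤ) - 2}
        = ((({0, 1} : Finset F)ᶜ : Finset F) : Set F) := by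
      ext x
      simp only [Set.mem_image, Finset.coe_compl, Set.mem_compl_iff, Finset.mem_coe,
        Finset.mem_insert, Finset.mem_singleton, not_or]
      constructor
      · rintro ⟨⟨i, j⟩, ⟨hA, -⟩, rfl⟩
        simp only [A, Set.mem_setOf_eq] at hA
        refine ⟨Units.ne_zero _, fun h => ?_⟩
        simp only at h
        rw [h] at hA
        exact Units.ne_zero (β ^ j) (by linear_combination hA)
      · rintro ⟨h0, h1⟩
        obtain ⟨i, hi1, hi2, hi⟩ := gol_surj hq hcard hα i₀ (Units.mk0 x h0)
        obtain ⟨j, hj1, hj2, hj⟩ := gol_surj hq hcard hβ j₀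
          (Units.mk0 (1 - x) (sub_ne_zero.mpr (Ne.symm h1)))
        refine ⟨(i, j), ⟨?_, hi1, hi2, hj1, hj2⟩, by simp only [hi, Units.val_mk0]⟩
        simp only [A, Set.mem_setOf_eq, hi, hj, Units.val_mk0]
        ring
    rw [him, Set.ncard_coe_finset, Finset.card_compl, hcard, Finset.card_pair zero_ne_one]
  · rintro ⟨i, j⟩ ⟨hA, h1, h2, h3, h4⟩ ⟨i', j'⟩ ⟨hA', h1', h2', h3', h4'⟩
      ⟨k, l⟩ ⟨hB, g1, g2, g3, g4⟩ ⟨k', l'⟩ ⟨hB', g1', g2', g3', g4'⟩ hd hne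
    simp only [A, Set.mem_setOf_eq] at *
    simp only [Prod.mk_sub_mk, Prod.mk.injEq] at hd
    obtain ⟨hd1, hd2⟩ := hd
    obtain ⟨a, rfl⟩ : ∃ a, i' = a + i := ⟨i' - i, by ring⟩
    obtain ⟨b, rfl⟩ : ∃ b, j' = b + j := ⟨j' - j, by ring⟩
    obtain rfl : k' = a + k := by linarith
    obtain rfl : l' = b + l := by linarith
    rw [zpow_add, zpow_add, Units.val_mul, Units.val_mul] at hA' hB'
    have hab : ((α ^ a : Fˣ) : F) ≠ ((β ^ b : Fˣ) : F) := by
      intro h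
      have hb1 : ((β ^ b : Fˣ) : F) = 1 := by
        rw [h] at hA'
        linear_combination hA' - ((β ^ b : Fˣ) : F) * hA
      have ha := gol_inj hq hcard hα h1' h2' h1 h2
        (by rw [zpow_add, Units.val_eq_one.mp (h.trans hb1), one_mul])
      have hb := gol_inj hq hcard hβ h3' h4' h3 h4
        (by rw [zpow_add, Units.val_eq_one.mp hb1, one_mul])
      exact hne (by rw [ha, hb])
    have hx : ((α ^ i : Fˣ) : F) = ((α ^ k : Fˣ) : F) := by
      apply mul_left_cancel₀ (sub_ne_zero.mpr hab)
      linear_combination hA' - hB' - ((β ^ b : Fˣ) : F) * (hA - hB)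
    have hy : ((β ^ j : Fˣ) : F) = ((β ^ l : Fˣ) : F) := by
      linear_combination hA - hB - hx
    obtain rfl := gol_inj hq hcard hα h1 h2 g1 g2 (Units.ext hx)
    obtain rfl := gol_inj hq hcard hβ h3 h4 g3 g4 (Units.ext hy)
    exact ⟨rfl, rfl⟩
end

section
/- Let S ⊆ {0, 1, …, n} be a Golomb ruler of length n, and let ℓ and k be positive integers with ℓ·k ≤ n+1. Then the set D = {(i,j) ∈ ℤ² : 0 ≤ i ≤ k−1, 0 ≤ j ≤ ℓ−1, i·ℓ + j ∈ S} is a distinct difference configuration (a Golomb rectangle of size ℓ × k). -/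
/-- A Golomb ruler: a set of integers all of whose pairwise differences are distinct. -/
def IsGolombRuler (S : Set ℤ) : Prop :=
  ∀ a ∈ S, ∀ b ∈ S, ∀ c ∈ S, ∀ d ∈ S, a - b = c - d → a ≠ b → a = c ∧ b = d

theorem fold_inj (l a b c d : ℤ) (hb : 0 ≤ b) (hb' : b ≤ l - 1) (hd : 0 ≤ d) (hd' : d ≤ l - 1)
    (h : a * l + b = c * l + d) : a = c ∧ b = d := by
  have hac : a = c := by
    rcases lt_trichotomy a c with h1 | h1 | h1
    · nlinarith
    · exact h1
    · nlinarith
  subst hac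
  exact ⟨rfl, by linarith⟩

/-- The Folded Ruler construction: folding a Golomb ruler of length `n` into an `ℓ × k`
rectangle (with `ℓ·k ≤ n+1`) yields a distinct difference configuration. -/
theorem stmt_16 (n : ℕ) (S : Set ℤ) (hS : S ⊆ Set.Icc 0 (n : ℤ)) (hG : IsGolombRuler S)
    (ℓ k : ℕ) (hℓ : 0 < ℓ) (hk : 0 < k) (hlk : ℓ * k ≤ n + 1) :
    IsDDC {v : ℤ × ℤ | 0 ≤ v.1 ∧ v.1 ≤ (k : ℤ) - 1 ∧ 0 ≤ v.2 ∧ v.2 ≤ (ℓ : ℤ) - 1 ∧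
      v.1 * (ℓ : ℤ) + v.2 ∈ S} := by
  rintro ⟨a, b⟩ ⟨-, -, h1, h2, h3⟩ ⟨c, d⟩ ⟨-, -, h4, h5, h6⟩ ⟨e, f⟩ ⟨-, -, h7, h8, h9⟩
    ⟨g, h⟩ ⟨-, -, h10, h11, h12⟩ hsub hne
  simp only [Prod.mk_sub_mk, Prod.mk.injEq, ne_eq] at *
  obtain ⟨e1, e2⟩ := hsub
  obtain ⟨r1, r2⟩ := hG _ h6 _ h3 _ h12 _ h9 (by linear_combination (ℓ : ℤ) * e1 + e2)
    (fun heq => hne (fold_inj ℓ _ _ _ _ h4 h5 h1 h2 heq))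
  exact ⟨fold_inj ℓ _ _ _ _ h1 h2 h7 h8 r2, fold_inj ℓ _ _ _ _ h4 h5 h10 h11 r1⟩
end

section
/- Let R ≥ 1 be an integer and let D ⊆ ℤ be a Golomb ruler. Define f(i,j) = i·R + j·(R+1) + R² + R, and let P = {(i,j) ∈ ℤ² : |i| + |j| ≤ R and f(i,j) ∈ D}. Then: (1) f restricted to the Lee sphere {(i,j) ∈ ℤ² : |i|+|j| ≤ R} is a bijection onto {0, 1, …, 2R²+2R}; (2) P is a distinct difference configuration in which any two points are at Manhattan distance at most 2R; (3) |P| = |D ∩ {0, 1, …, 2R²+2R}|. -/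
/-- The LeeDD construction: `f(i,j) = iR + j(R+1) + R² + R` is a bijection from the Lee
sphere of radius `R` onto `{0, …, 2R²+2R}`; the points of the Lee sphere whose `f`-value
lies in a Golomb ruler `D` form a distinct difference configuration with pairwise Manhattan
distance at most `2R`, of size `|D ∩ {0, …, 2R²+2R}|`. -/
theorem stmt_17 (R : ℤ) (hR : 1 ≤ R) (D : Set ℤ) (hD : IsGolombRuler D) :
    let f : ℤ × ℤ → ℤ := fun v => v.1 * R + v.2 * (R + 1) + R ^ 2 + R
    let P : Set (ℤ × ℤ) := {v | |v.1| + |v.2| ≤ R ∧ f v ∈ D}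
    Set.BijOn f {v : ℤ × ℤ | |v.1| + |v.2| ≤ R} (Set.Icc 0 (2 * R ^ 2 + 2 * R)) ∧
    (IsDDC P ∧ ∀ p ∈ P, ∀ q ∈ P, mdist p q ≤ 2 * R) ∧
    P.ncard = (D ∩ Set.Icc 0 (2 * R ^ 2 + 2 * R)).ncard := by
  intro f P
  have key : ∀ v : ℤ × ℤ, |v.1| + |v.2| ≤ R ↔
      (v.1 + v.2 ≤ R ∧ -R ≤ v.1 + v.2 ∧ v.1 - v.2 ≤ R ∧ -R ≤ v.1 - v.2) := by
    intro v
    rcases abs_cases v.1 with h | h <;> rcases abs_cases v.2 with h' | h' <;> omega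
  have hB : Set.BijOn f {v : ℤ × ℤ | |v.1| + |v.2| ≤ R} (Set.Icc 0 (2 * R ^ 2 + 2 * R)) := by
    refine ⟨?_, ?_, ?_⟩
    · rintro ⟨i, j⟩ hv
      have hv := (key _).1 hv
      simp only [f, Set.mem_Icc] at hv ⊢
      obtain ⟨h1, h2, h3, h4⟩ := hv
      constructor
      · have := mul_nonneg (by linarith : (0 : ℤ) ≤ R) (by linarith : 0 ≤ i + j + R)
        nlinarith
      · have := mul_nonneg (by linarith : (0 : ℤ) ≤ R) (by linarith : 0 ≤ R - (i + j))
        nlinarith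
    · rintro ⟨i, j⟩ hv ⟨k, l⟩ hw h
      have hv := (key _).1 hv
      have hw := (key _).1 hw
      simp only [f] at hv hw h
      obtain ⟨h1, h2, h3, h4⟩ := hv
      obtain ⟨g1, g2, g3, g4⟩ := hw
      have e : (i - j) - (k - l) = ((i + j) - (k + l)) * (2 * R + 1) := by linarith
      have hs : i + j = k + l := by
        rcases lt_trichotomy (i + j) (k + l) with c | c | c
        · nlinarith
        · exact c
        · nlinarith
      have : i - j = k - l := by
        rw [hs] at e
        linarith
      ext <;> simp <;> omega
    · rintro n ⟨hn0, hn1⟩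
      obtain ⟨m, hm⟩ : ∃ m, m = n - R ^ 2 - R := ⟨_, rfl⟩
      obtain ⟨s, hs⟩ : ∃ s, s = (2 * m + R) / (2 * R + 1) := ⟨_, rfl⟩
      have hpos : 0 < 2 * R + 1 := by linarith
      have a1 : s * (2 * R + 1) ≤ 2 * m + R := by
        rw [hs]; exact Int.ediv_mul_le _ hpos.ne'
      have a2 : 2 * m + R < (s + 1) * (2 * R + 1) := by
        rw [hs]; exact Int.lt_ediv_add_one_mul_self _ hpos
      have b1 : s < R + 1 := by
        by_contra hc
        push Not at hc
        nlinarith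
      have b2 : -R < s + 1 := by
        by_contra hc
        push Not at hc
        nlinarith
      refine ⟨(s - (m - s * R), m - s * R), (key _).2 ?_, ?_⟩
      · refine ⟨?_, ?_, ?_, ?_⟩ <;> simp only <;> linarith
      · simp only [f]
        rw [show n = m + R ^ 2 + R by linarith]
        ring
  have hinj : ∀ p ∈ P, ∀ q ∈ P, f p = f q → p = q := fun p hp q hq h => hB.injOn hp.1 hq.1 h
  refine ⟨hB, ⟨?_, ?_⟩, ?_⟩
  · intro p₁ hp₁ p₂ hp₂ q₁ hq₁ q₂ hq₂ h hne
    have e1 : p₂.1 - p₁.1 = q₂.1 - q₁.1 := congrArg Prod.fst h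
    have e2 : p₂.2 - p₁.2 = q₂.2 - q₁.2 := congrArg Prod.snd h
    have e : f p₂ - f p₁ = f q₂ - f q₁ := by
      simp only [f]
      linear_combination R * e1 + (R + 1) * e2
    obtain ⟨r1, r2⟩ := hD _ hp₂.2 _ hp₁.2 _ hq₂.2 _ hq₁.2 e
      (fun hh => hne (hinj _ hp₂ _ hp₁ hh))
    exact ⟨hinj _ hp₁ _ hq₁ r2, hinj _ hp₂ _ hq₂ r1⟩
  · intro p hp q hq
    have h1 := hp.1
    have h2 := hq.1
    have h3 := abs_sub q.1 p.1
    have h4 := abs_sub q.2 p.2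
    unfold mdist
    linarith
  · have him : f '' P = D ∩ Set.Icc 0 (2 * R ^ 2 + 2 * R) := by
      ext n
      constructor
      · rintro ⟨v, hv, rfl⟩
        exact ⟨hv.2, hB.mapsTo hv.1⟩
      · rintro ⟨hn, hn'⟩
        obtain ⟨v, hv, rfl⟩ := hB.surjOn hn'
        exact ⟨v, ⟨hv, hn⟩, rfl⟩
    rw [← him]
    exact (Set.ncard_image_of_injOn (fun p hp q hq h => hinj p hp q hq h)).symm
end

section
/- Let S ⊆ ℤ² be a finite nonempty set, let η, κ be positive integers, and let A ⊆ ℤ² be doubly periodic with period (η,κ), i.e., for all (i,j) ∈ ℤ², (i,j) ∈ A ⟺ (i+η,j) ∈ A ⟺ (i,j+κ) ∈ A. Let d = |A ∩ ({0,…,η−1} × {0,…,κ−1})| and suppose that for every v ∈ ℤ² the set A ∩ (v + S) is a distinct difference configuration. Then there exists a subset D ⊆ S that is a distinct difference configuration with |D| ≥ ⌈(d/(η·κ))·|S|⌉. -/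
theorem mem_mod_iff (η κ : ℕ) (A : Set (ℤ × ℤ))
    (hper : ∀ v : ℤ × ℤ, (v ∈ A ↔ (v.1 + (η : ℤ), v.2) ∈ A) ∧
      (v ∈ A ↔ (v.1, v.2 + (κ : ℤ)) ∈ A)) (x y : ℤ) :
    (x % (η : ℤ), y % (κ : ℤ)) ∈ A ↔ (x, y) ∈ A := by
  have h1 : ∀ y : ℤ, Function.Periodic (fun x : ℤ => (x, y) ∈ A) (η : ℤ) :=
    fun y x => propext ((hper (x, y)).1).symm
  have h2 : ∀ x : ℤ, Function.Periodic (fun y : ℤ => (x, y) ∈ A) (κ : ℤ) :=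
    fun x y => propext ((hper (x, y)).2).symm
  have e1 := (h1 (y % κ)).int_mul (x / η) (x % η)
  have e2 := (h2 x).int_mul (y / κ) (y % κ)
  have a1 : x % (η : ℤ) + x / η * η = x := by rw [mul_comm]; exact Int.emod_add_mul_ediv x η
  have a2 : y % (κ : ℤ) + y / κ * κ = y := by rw [mul_comm]; exact Int.emod_add_mul_ediv y κ
  simp only [Int.cast_id, a1, a2] at e1 e2
  rw [← e1, ← e2]

open Classical in
theorem window_count (η κ : ℕ) (hη : 0 < η) (hκ : 0 < κ) (A : Set (ℤ × ℤ))
    (hper : ∀ v : ℤ × ℤ, (v ∈ A ↔ (v.1 + (η : ℤ), v.2) ∈ A) ∧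
      (v ∈ A ↔ (v.1, v.2 + (κ : ℤ)) ∈ A)) (s : ℤ × ℤ) :
    ((Finset.Ico (0 : ℤ) η ×ˢ Finset.Ico (0 : ℤ) κ).filter (fun v => v + s ∈ A)).card =
    ((Finset.Ico (0 : ℤ) η ×ˢ Finset.Ico (0 : ℤ) κ).filter (fun v => v ∈ A)).card := by
  have hη' : (0 : ℤ) < η := by exact_mod_cast hη
  have hκ' : (0 : ℤ) < κ := by exact_mod_cast hκ
  refine Finset.card_nbij' (fun v => ((v.1 + s.1) % (η : ℤ), (v.2 + s.2) % (κ : ℤ)))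
    (fun v => ((v.1 - s.1) % (η : ℤ), (v.2 - s.2) % (κ : ℤ))) ?_ ?_ ?_ ?_
  · rintro ⟨x, y⟩ h
    simp only [Finset.coe_filter, Finset.mem_product, Finset.mem_Ico, Set.mem_ofPred_eq] at h ⊢
    refine ⟨⟨⟨Int.emod_nonneg _ hη'.ne', Int.emod_lt_of_pos _ hη'⟩,
      ⟨Int.emod_nonneg _ hκ'.ne', Int.emod_lt_of_pos _ hκ'⟩⟩, ?_⟩
    exact (mem_mod_iff η κ A hper _ _).2 h.2
  · rintro ⟨x, y⟩ h
    simp only [Finset.coe_filter, Finset.mem_product, Finset.mem_Ico, Set.mem_ofPred_eq] at h ⊢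
    refine ⟨⟨⟨Int.emod_nonneg _ hη'.ne', Int.emod_lt_of_pos _ hη'⟩,
      ⟨Int.emod_nonneg _ hκ'.ne', Int.emod_lt_of_pos _ hκ'⟩⟩, ?_⟩
    refine (mem_mod_iff η κ A hper _ _).1 ?_
    simp only [Int.emod_add_emod, sub_add_cancel]
    exact (mem_mod_iff η κ A hper _ _).2 h.2
  · rintro ⟨x, y⟩ h
    simp only [Finset.coe_filter, Finset.mem_product, Finset.mem_Ico, Set.mem_ofPred_eq] at h
    simp only [Int.emod_sub_emod, add_sub_cancel_right]
    rw [Int.emod_eq_of_lt h.1.1.1 h.1.1.2, Int.emod_eq_of_lt h.1.2.1 h.1.2.2]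
  · rintro ⟨x, y⟩ h
    simp only [Finset.coe_filter, Finset.mem_product, Finset.mem_Ico, Set.mem_ofPred_eq] at h
    simp only [Int.emod_add_emod, sub_add_cancel]
    rw [Int.emod_eq_of_lt h.1.1.1 h.1.1.2, Int.emod_eq_of_lt h.1.2.1 h.1.2.2]

/-- If `A` is a doubly periodic array of period `(η,κ)` with `d` dots per `κ × η` window,
such that the dots of `A` in every translate of the shape `S` form a distinct difference
configuration, then `S` contains a distinct difference configuration with at least
`⌈(d/(ηκ))·|S|⌉` dots. -/
theorem stmt_18 (S : Finset (ℤ × ℤ)) (hS : S.Nonempty) (η κ : ℕ) (hη : 0 < η) (hκ : 0 < κ)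
    (A : Set (ℤ × ℤ))
    (hper : ∀ v : ℤ × ℤ, (v ∈ A ↔ (v.1 + (η : ℤ), v.2) ∈ A) ∧
      (v ∈ A ↔ (v.1, v.2 + (κ : ℤ)) ∈ A))
    (d : ℕ) (hd : d = (A ∩ Set.Ico (0 : ℤ) (η : ℤ) ×ˢ Set.Ico (0 : ℤ) (κ : ℤ)).ncard)
    (hDDC : ∀ v : ℤ × ℤ, IsDDC (A ∩ ((fun s => v + s) '' (S : Set (ℤ × ℤ))))) :
    ∃ D : Finset (ℤ × ℤ), (D : Set (ℤ × ℤ)) ⊆ (S : Set (ℤ × ℤ)) ∧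
      IsDDC (D : Set (ℤ × ℤ)) ∧
      ⌈(d : ℚ) / ((η : ℚ) * (κ : ℚ)) * (S.card : ℚ)⌉ ≤ (D.card : ℤ) := by
  classical
  set W := Finset.Ico (0 : ℤ) η ×ˢ Finset.Ico (0 : ℤ) κ with hW
  have hWc : W.card = η * κ := by simp [hW]
  have hd' : d = (W.filter (fun v => v ∈ A)).card := by
    rw [hd, ← Set.ncard_coe_finset]
    congr 1
    ext v
    simp only [hW, Set.mem_inter_iff, Set.mem_prod, Set.mem_Ico, Finset.coe_filter,
      Finset.mem_product, Finset.mem_Ico, Set.mem_ofPred_eq]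
    tauto
  have hsum : ∑ v ∈ W, (S.filter (fun s => v + s ∈ A)).card = S.card * d := by
    have := Finset.sum_card_bipartiteAbove_eq_sum_card_bipartiteBelow
      (s := W) (t := S) (fun v s => v + s ∈ A)
    unfold Finset.bipartiteAbove Finset.bipartiteBelow at this
    rw [this, Finset.sum_congr rfl (fun s _ => window_count η κ hη hκ A hper s), ← hW, ← hd']
    simp
  have hWne : W.Nonempty := by
    rw [← Finset.card_pos, hWc]; positivity
  have hex : ∃ v ∈ W, S.card * d ≤ η * κ * (S.filter (fun s => v + s ∈ A)).card := by
    apply Finset.exists_le_of_sum_le hWne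
    rw [Finset.sum_const, ← Finset.mul_sum, hsum, hWc, smul_eq_mul]
  obtain ⟨v, -, hv⟩ := hex
  refine ⟨S.filter (fun s => v + s ∈ A), Finset.coe_subset.2 (Finset.filter_subset _ _), ?_, ?_⟩
  · have key : ∀ p ∈ ((S.filter (fun s => v + s ∈ A) : Finset (ℤ × ℤ)) : Set (ℤ × ℤ)),
        v + p ∈ A ∩ ((fun s => v + s) '' (S : Set (ℤ × ℤ))) := by
      intro p hp
      simp only [Finset.coe_filter, Set.mem_ofPred_eq] at hp
      exact ⟨hp.2, p, hp.1, rfl⟩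
    intro p₁ h1 p₂ h2 q₁ h3 q₂ h4 he hne
    have := hDDC v _ (key _ h1) _ (key _ h2) _ (key _ h3) _ (key _ h4)
      (by simpa using he) (by simpa using hne)
    simpa using this
  · rw [Int.ceil_le]
    have hpos : (0 : ℚ) < (η : ℚ) * κ := by positivity
    rw [div_mul_eq_mul_div, div_le_iff₀ hpos]
    have : ((S.card * d : ℕ) : ℚ) ≤ ((η * κ * (S.filter (fun s => v + s ∈ A)).card : ℕ) : ℚ) :=
      by exact_mod_cast hv
    push_cast at this ⊢
    linarith
end

section
/- For every real ε > 0 there exists a positive integer r₀ such that for every integer r ≥ r₀ there exists a distinct difference configuration D ⊆ ℤ² whose points have pairwise Manhattan distance at most r and with |D| ≥ (1/√2 − ε)·r. In other words, there exist DD̄(m,r) with m = r/√2 − o(r), matching asymptotically the upper bound m ≤ r/√2 + O(r^(2/3)). -/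
lemma bose_chowla (q : ℕ) (hq : IsPrimePow q) :
    ∃ (K : Type) (_ : Field K) (_ : Finite K), Nat.card K = q ^ 2 ∧
      ∃ A : Finset Kˣ, A.card = q ∧ ∀ a ∈ A, ∀ b ∈ A, ∀ c ∈ A, ∀ d ∈ A, a * b = c * d →
        (a = c ∧ b = d) ∨ (a = d ∧ b = c) := by
  classical
  obtain ⟨p, k, hp, hk, rfl⟩ := (isPrimePow_nat_iff _).1 hq
  have : Fact p.Prime := ⟨hp⟩
  have hk2 : 2 * k ≠ 0 := by omega
  have : Fintype (GaloisField p k) := Fintype.ofFinite _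
  have hcardF : Nat.card (GaloisField p k) = p ^ k := GaloisField.card p k hk.ne'
  have hcardK : Nat.card (GaloisField p (2 * k)) = p ^ (2 * k) := GaloisField.card p _ hk2
  obtain ⟨f⟩ : Nonempty (GaloisField p k →ₐ[ZMod p] GaloisField p (2 * k)) := by
    apply FiniteField.nonempty_algHom_of_finrank_dvd
    rw [GaloisField.finrank p hk.ne', GaloisField.finrank p hk2]
    exact Dvd.intro_left 2 rfl
  have hfi : Function.Injective f := f.toRingHom.injective
  obtain ⟨θ, hθ⟩ : ∃ θ, ∀ a, f a ≠ θ := by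
    by_contra hcon
    push Not at hcon
    have := Nat.card_le_card_of_surjective f hcon
    rw [hcardF, hcardK] at this
    exact absurd this (not_le.2 (Nat.pow_lt_pow_right hp.one_lt (by omega)))
  have hne : ∀ a, θ + f a ≠ 0 := by
    intro a ha
    apply hθ (-a)
    rw [map_neg]
    linear_combination -ha
  let e : GaloisField p k → (GaloisField p (2 * k))ˣ := fun a => Units.mk0 _ (hne a)
  have he : Function.Injective e := by
    intro a b hab
    have := congrArg Units.val hab
    simp only [e, Units.val_mk0] at this
    exact hfi (add_left_cancel this)
  refine ⟨GaloisField p (2 * k), inferInstance, inferInstance, ?_, Finset.univ.image e, ?_, ?_⟩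
  · rw [hcardK]; ring
  · rw [Finset.card_image_of_injective _ he, Finset.card_univ, ← Nat.card_eq_fintype_card, hcardF]
  · simp only [Finset.mem_image, Finset.mem_univ, true_and]
    rintro _ ⟨a, rfl⟩ _ ⟨b, rfl⟩ _ ⟨c, rfl⟩ _ ⟨d, rfl⟩ h
    have h1 := congrArg Units.val h
    simp only [e, Units.val_mk0, Units.val_mul] at h1
    have h2 : f (a + b - c - d) * θ = f (c * d - a * b) := by
      simp only [map_add, map_sub, map_mul]
      linear_combination h1
    have h3 : a + b - c - d = 0 := by
      by_contra h0
      apply hθ ((c * d - a * b) / (a + b - c - d))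
      have : f (a + b - c - d) ≠ 0 := by
        rwa [Ne, map_eq_zero_iff f hfi]
      rw [map_div₀, ← h2]
      field_simp
    have h4 : c * d - a * b = 0 := by
      rw [h3] at h2
      apply hfi
      rw [← h2]; simp
    have h5 : (a - c) * (a - d) = 0 := by
      linear_combination a * h3 + h4
    rcases mul_eq_zero.1 h5 with h6 | h6
    · left
      have ha : a = c := sub_eq_zero.1 h6
      subst ha
      have hb : b = d := by linear_combination h3
      subst hb; simp
    · right
      have ha : a = d := sub_eq_zero.1 h6
      subst ha
      have hb : b = c := by linear_combination h3
      subst hb; simp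

lemma fold (q r : ℕ) (hq : IsPrimePow q) (hrq : (r + 2) ^ 2 ≤ 2 * q ^ 2) :
    ∃ D : Finset (ℤ × ℤ), IsDDC (D : Set (ℤ × ℤ)) ∧
        (∀ p ∈ D, ∀ q ∈ D, mdist p q ≤ (r : ℤ)) ∧ r ^ 2 ≤ 2 * (D.card * q) := by
  classical
  obtain ⟨K, _, _, hK, A, hA, hS⟩ := bose_chowla q hq
  have : Fintype Kˣ := Fintype.ofFinite _
  obtain ⟨g, hg⟩ := IsCyclic.exists_generator (α := Kˣ)
  have hq1 : 1 ≤ q := hq.one_lt.le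
  have hcU : Fintype.card Kˣ = q ^ 2 - 1 := by
    rw [← Nat.card_eq_fintype_card, Nat.card_units, hK]
  have hord : orderOf g = q ^ 2 - 1 := by
    rw [orderOf_eq_card_of_forall_mem_zpowers hg, Nat.card_eq_fintype_card, hcU]
  obtain ⟨m, hm⟩ : ∃ m, m = (r + 1) / 2 := ⟨_, rfl⟩
  let w : ℕ × ℕ → ℤ × ℤ := fun ij => ((ij.1 : ℤ) - ((ij.1 / 2 : ℕ) - ij.2), (ij.1 / 2 : ℕ) - ij.2)
  let W : Finset (ℤ × ℤ) := (Finset.range (r + 1) ×ˢ Finset.range m).image w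
  let h : ℤ × ℤ → ℤ := fun p => m * (p.1 + p.2) + p.2
  have hWm : ∀ p ∈ W, ∃ i j : ℕ, i ≤ r ∧ j < m ∧ w (i, j) = p := by
    intro p hp
    simp only [W, Finset.mem_image, Finset.mem_product, Finset.mem_range, Prod.exists] at hp
    obtain ⟨i, j, ⟨hi, hj⟩, rfl⟩ := hp
    exact ⟨i, j, by omega, hj, rfl⟩
  have hhw : ∀ i j, h (w (i, j)) = m * i + (i / 2 : ℕ) - j := by
    intro i j; simp only [h, w]; ring
  have hinjZ : ∀ i j i' j' : ℕ, j < m → j' < m → h (w (i, j)) = h (w (i', j')) → i ≤ i' → i = i' ∧ j = j' := by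
    intro i j i' j' hj hj' he hi
    rw [hhw, hhw] at he
    obtain ⟨d, rfl⟩ := Nat.exists_eq_add_of_le hi
    have h1 : i / 2 ≤ (i + d) / 2 := Nat.div_le_div_right (by omega)
    have h2 : (m : ℤ) * d + (((i + d) / 2 : ℕ) - (i / 2 : ℕ)) = j' - j := by
      push_cast at he ⊢; linear_combination -he
    rcases Nat.eq_zero_or_pos d with rfl | hd
    · simp at he ⊢; omega
    · have : (m : ℤ) * 1 ≤ m * d := by
        apply mul_le_mul_of_nonneg_left <;> omega
      omega
  have hhinj : ∀ p ∈ W, ∀ p' ∈ W, h p = h p' → p = p' := by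
    intro p hp p' hp' he
    obtain ⟨i, j, hi, hj, rfl⟩ := hWm p hp
    obtain ⟨i', j', hi', hj', rfl⟩ := hWm p' hp'
    rcases le_total i i' with hle | hle
    · obtain ⟨rfl, rfl⟩ := hinjZ i j i' j' hj hj' he hle; rfl
    · obtain ⟨rfl, rfl⟩ := hinjZ i' j' i j hj' hj he.symm hle; rfl
  have hrange : ∀ p ∈ W, -(m : ℤ) < h p ∧ h p ≤ m * r + (r / 2 : ℕ) := by
    intro p hp
    obtain ⟨i, j, hi, hj, rfl⟩ := hWm p hp
    rw [hhw]
    have : (m : ℤ) * i ≤ m * r := by apply mul_le_mul_of_nonneg_left <;> omega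
    have h0 : (0 : ℤ) ≤ m * i := by positivity
    constructor <;> omega
  have hspan : (m : ℤ) * r + (r / 2 : ℕ) + m < q ^ 2 := by
    have h1 : (2 : ℤ) * m ≤ r + 1 := by omega
    have h2 : (2 : ℤ) * (r / 2 : ℕ) ≤ r := by omega
    have h3 : ((r : ℤ) + 2) ^ 2 ≤ 2 * q ^ 2 := by exact_mod_cast hrq
    nlinarith
  have hπ : ∀ p ∈ W, ∀ p' ∈ W, g ^ h p = g ^ h p' → p = p' := by
    intro p hp p' hp' he
    apply hhinj p hp p' hp'
    have h1 := zpow_eq_zpow_iff_modEq.1 he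
    rw [hord] at h1
    have h2 := h1.dvd
    have hb := hrange p hp
    have hb' := hrange p' hp'
    have hN : ((q ^ 2 - 1 : ℕ) : ℤ) = q ^ 2 - 1 := by
      have : 1 ≤ q ^ 2 := Nat.one_le_pow _ _ hq1
      push_cast [Nat.cast_sub this]; ring
    have h3 := Int.eq_zero_of_abs_lt_dvd h2 (by rw [hN, abs_lt]; constructor <;> linarith)
    linarith
  have hcardW : W.card = (r + 1) * m := by
    rw [Finset.card_image_of_injOn, Finset.card_product, Finset.card_range, Finset.card_range]
    rintro ⟨i, j⟩ hij ⟨i', j'⟩ hij' he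
    simp only [Finset.coe_product, Set.mem_prod, Finset.mem_coe, Finset.mem_range] at hij hij'
    rcases le_total i i' with hle | hle
    · obtain ⟨rfl, rfl⟩ := hinjZ i j i' j' hij.2 hij'.2 (congrArg h he) hle; rfl
    · obtain ⟨rfl, rfl⟩ := hinjZ i' j' i j hij'.2 hij.2 (congrArg h he).symm hle; rfl
  let D : Kˣ → Finset (ℤ × ℤ) := fun c => W.filter (fun p => c * g ^ h p ∈ A)
  have hsum : ∑ c : Kˣ, (D c).card = (r + 1) * m * q := by
    simp only [D, Finset.card_filter]
    rw [Finset.sum_comm]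
    have : ∀ p ∈ W, (∑ c : Kˣ, if c * g ^ h p ∈ A then 1 else 0) = q := by
      intro p hp
      rw [← Finset.card_filter, ← hA]
      apply Finset.card_bij (fun c _ => c * g ^ h p)
      · intro c hc; simpa using hc
      · intro c _ c' _ he; exact mul_right_cancel he
      · intro a ha; exact ⟨a * (g ^ h p)⁻¹, by simpa using ha, by simp⟩
    rw [Finset.sum_congr rfl this, Finset.sum_const, hcardW, smul_eq_mul]
  obtain ⟨c, hc⟩ : ∃ c, (r + 1) * m ≤ (D c).card * q := by
    by_contra hcon
    push Not at hcon
    have h1 : ∑ c : Kˣ, (D c).card * q < ∑ c : Kˣ, (r + 1) * m :=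
      Finset.sum_lt_sum_of_nonempty ⟨1, Finset.mem_univ _⟩ (fun c _ => hcon c)
    rw [← Finset.sum_mul, hsum, Finset.sum_const, Finset.card_univ, hcU, smul_eq_mul] at h1
    have h2 : (q ^ 2 - 1) * ((r + 1) * m) ≤ q ^ 2 * ((r + 1) * m) :=
      Nat.mul_le_mul_right _ (Nat.sub_le _ _)
    nlinarith
  refine ⟨D c, ?_, ?_, ?_⟩
  · intro p₁ hp₁ p₂ hp₂ q₁ hq₁ q₂ hq₂ he hne
    simp only [D, Finset.coe_filter, Set.mem_ofPred_eq] at hp₁ hp₂ hq₁ hq₂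
    have hh : h p₂ + h q₁ = h q₂ + h p₁ := by
      have e1 := congrArg Prod.fst he
      have e2 := congrArg Prod.snd he
      simp only [Prod.fst_sub, Prod.snd_sub] at e1 e2
      simp only [h]
      linear_combination (m : ℤ) * e1 + (m + 1 : ℤ) * e2
    have hm := hS _ hp₂.2 _ hq₁.2 _ hq₂.2 _ hp₁.2 (by
      rw [mul_mul_mul_comm, mul_mul_mul_comm c (g ^ h q₂), ← zpow_add, ← zpow_add, hh])
    rcases hm with ⟨h1, h2⟩ | ⟨h1, h2⟩
    · exact ⟨(hπ _ hq₁.1 _ hp₁.1 (mul_left_cancel h2)).symm, hπ _ hp₂.1 _ hq₂.1 (mul_left_cancel h1)⟩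
    · exact absurd (hπ _ hp₂.1 _ hp₁.1 (mul_left_cancel h1)) hne
  · intro p hp p' hp'
    obtain ⟨i, j, hi, hj, rfl⟩ := hWm p (Finset.mem_filter.1 hp).1
    obtain ⟨i', j', hi', hj', rfl⟩ := hWm p' (Finset.mem_filter.1 hp').1
    simp only [mdist, w]
    rcases abs_cases ((i' : ℤ) - ((i' / 2 : ℕ) - j') - (i - ((i / 2 : ℕ) - j))) with h1 | h1 <;>
    rcases abs_cases (((i' / 2 : ℕ) : ℤ) - j' - ((i / 2 : ℕ) - j)) with h2 | h2 <;>
    rw [h1.1, h2.1] <;> clear h1 h2 hspan hrange hhw <;> omega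
  · have : r ≤ 2 * m := by omega
    nlinarith

open MeasureTheory Filter Topology

noncomputable def kf (t : ℝ) : ℝ :=
  3 * Real.pi ^ 2 * ((1 - t) * Real.cos (Real.pi * t)) + 5 * Real.pi * Real.sin (Real.pi * t)

noncomputable def kphi (t : ℝ) : ℝ := kf (min |t| 1)

noncomputable def kg (u : ℝ) : ℝ := 2 * ∫ t in (0 : ℝ)..1, kf t * Real.cos (u * t)

lemma kf_continuous : Continuous kf := by unfold kf; fun_prop

lemma kphi_continuous : Continuous kphi := by
  unfold kphi; exact kf_continuous.comp (by fun_prop)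

lemma kg_continuous : Continuous kg := by
  unfold kg
  refine continuous_const.mul ?_
  apply intervalIntegral.continuous_parametric_intervalIntegral_of_continuous'
  have := kf_continuous
  simp only [Function.uncurry_def]
  fun_prop

lemma kg_formula (u : ℝ) : (u ^ 2 - Real.pi ^ 2) ^ 2 * kg u =
    4 * Real.pi ^ 2 * (1 + Real.cos u) * (4 * Real.pi ^ 2 - u ^ 2) := by
  have hf : ∀ t, HasDerivAt kf (2 * Real.pi ^ 2 * Real.cos (Real.pi * t)
      - 3 * Real.pi ^ 3 * ((1 - t) * Real.sin (Real.pi * t))) t := by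
    intro t
    have hc : HasDerivAt (fun t : ℝ => Real.cos (Real.pi * t)) (-Real.sin (Real.pi * t) * (Real.pi * 1)) t :=
      ((hasDerivAt_id t).const_mul Real.pi).cos
    have hs : HasDerivAt (fun t : ℝ => Real.sin (Real.pi * t)) (Real.cos (Real.pi * t) * (Real.pi * 1)) t :=
      ((hasDerivAt_id t).const_mul Real.pi).sin
    have h := ((((hasDerivAt_id t).const_sub 1).mul hc).const_mul (3 * Real.pi ^ 2)).add
      (hs.const_mul (5 * Real.pi))
    refine h.congr_deriv ?_
    simp only [id]
    ring
  have hG : ∀ t ∈ Set.uIcc (0 : ℝ) 1, HasDerivAt (fun t : ℝ => (u ^ 2 - Real.pi ^ 2) *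
      ((2 * Real.pi ^ 2 * Real.cos (Real.pi * t)
      - 3 * Real.pi ^ 3 * ((1 - t) * Real.sin (Real.pi * t))) * Real.cos (u * t)
      + u * (kf t * Real.sin (u * t)))
      - (6 * Real.pi ^ 4 * (Real.cos (Real.pi * t) * Real.cos (u * t))
        + 6 * Real.pi ^ 3 * u * (Real.sin (Real.pi * t) * Real.sin (u * t))))
      ((u ^ 2 - Real.pi ^ 2) ^ 2 * (kf t * Real.cos (u * t))) t := by
    intro t _
    have hc : HasDerivAt (fun t : ℝ => Real.cos (Real.pi * t)) (-Real.sin (Real.pi * t) * (Real.pi * 1)) t :=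
      ((hasDerivAt_id t).const_mul Real.pi).cos
    have hs : HasDerivAt (fun t : ℝ => Real.sin (Real.pi * t)) (Real.cos (Real.pi * t) * (Real.pi * 1)) t :=
      ((hasDerivAt_id t).const_mul Real.pi).sin
    have hcu : HasDerivAt (fun t : ℝ => Real.cos (u * t)) (-Real.sin (u * t) * (u * 1)) t :=
      ((hasDerivAt_id t).const_mul u).cos
    have hsu : HasDerivAt (fun t : ℝ => Real.sin (u * t)) (Real.cos (u * t) * (u * 1)) t :=
      ((hasDerivAt_id t).const_mul u).sin
    have h := (((((hc.const_mul (2 * Real.pi ^ 2)).sub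
      ((((hasDerivAt_id t).const_sub 1).mul hs).const_mul (3 * Real.pi ^ 3))).mul hcu).add
      (((hf t).mul hsu).const_mul u)).const_mul (u ^ 2 - Real.pi ^ 2)).sub
      (((hc.mul hcu).const_mul (6 * Real.pi ^ 4)).add
       ((hs.mul hsu).const_mul (6 * Real.pi ^ 3 * u)))
    refine h.congr_deriv ?_
    simp only [id, kf]
    simp only [Pi.mul_apply, Pi.sub_apply]
    ring
  have hint : IntervalIntegrable (fun t => (u ^ 2 - Real.pi ^ 2) ^ 2 * (kf t * Real.cos (u * t)))
      volume 0 1 := by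
    apply Continuous.intervalIntegrable
    have := kf_continuous
    fun_prop
  have h := intervalIntegral.integral_eq_sub_of_hasDerivAt hG hint
  rw [intervalIntegral.integral_const_mul] at h
  unfold kg
  rw [show ∀ a b : ℝ, a * (2 * b) = 2 * (a * b) by intros; ring, h]
  simp [kf]
  ring

lemma kg_nonpos {u : ℝ} (hu : 2 * Real.pi ≤ |u|) : kg u ≤ 0 := by
  have hpi := Real.pi_pos
  have h1 : (2 * Real.pi) ^ 2 ≤ u ^ 2 := by
    rw [← sq_abs u]; gcongr
  have h2 : 0 < (u ^ 2 - Real.pi ^ 2) ^ 2 := by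
    apply pow_pos; nlinarith
  have h3 := kg_formula u
  by_contra hcon
  push Not at hcon
  have h4 := mul_pos h2 hcon
  rw [h3] at h4
  have h5 : 0 ≤ 1 + Real.cos u := by linarith [Real.neg_one_le_cos u]
  have h6 : 0 ≤ 4 * Real.pi ^ 2 * (1 + Real.cos u) := by positivity
  nlinarith [mul_nonneg h6 (by nlinarith : (0 : ℝ) ≤ u ^ 2 - 4 * Real.pi ^ 2)]

lemma kg_bound_far {u : ℝ} (hu : 2 * Real.pi ≤ |u|) : |kg u| ≤ 32 * Real.pi ^ 2 * (1 + u ^ 2)⁻¹ := by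
  have hpi := Real.pi_gt_three
  have h1 : (2 * Real.pi) ^ 2 ≤ u ^ 2 := by
    rw [← sq_abs u]; gcongr
  have h0 : 0 < u ^ 2 - Real.pi ^ 2 := by nlinarith
  have h2 : 0 < (u ^ 2 - Real.pi ^ 2) ^ 2 := by positivity
  have h3 := kg_formula u
  have hn := kg_nonpos hu
  have h5 : 1 + Real.cos u ≤ 2 := by linarith [Real.cos_le_one u]
  rw [abs_of_nonpos hn, ← div_eq_mul_inv, le_div_iff₀ (by positivity)]
  have h7 : (u ^ 2 - Real.pi ^ 2) ^ 2 * (-kg u) ≤ 8 * Real.pi ^ 2 * (u ^ 2 - 4 * Real.pi ^ 2) := by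
    have : 4 * Real.pi ^ 2 * (1 + Real.cos u) * (u ^ 2 - 4 * Real.pi ^ 2) ≤
        4 * Real.pi ^ 2 * 2 * (u ^ 2 - 4 * Real.pi ^ 2) := by
      gcongr
      nlinarith
    nlinarith
  have h8 : (u ^ 2 - Real.pi ^ 2) * (-kg u) ≤ 8 * Real.pi ^ 2 := by
    have : (u ^ 2 - Real.pi ^ 2) * ((u ^ 2 - Real.pi ^ 2) * (-kg u)) ≤
        (u ^ 2 - Real.pi ^ 2) * (8 * Real.pi ^ 2) := by nlinarith [sq_nonneg Real.pi]
    exact le_of_mul_le_mul_left this h0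
  have h9 : 1 + u ^ 2 ≤ 4 * (u ^ 2 - Real.pi ^ 2) := by nlinarith
  nlinarith [mul_le_mul_of_nonneg_left h9 (neg_nonneg.2 hn)]

lemma kg_integrable : Integrable kg := by
  obtain ⟨B, hB⟩ := (isCompact_Icc (a := -(2 * Real.pi)) (b := 2 * Real.pi)).exists_bound_of_continuousOn
    kg_continuous.continuousOn
  have hI := integrable_inv_one_add_sq.const_mul (max (B * (1 + (2 * Real.pi) ^ 2)) (32 * Real.pi ^ 2))
  refine hI.mono' kg_continuous.aestronglyMeasurable (ae_of_all _ fun u => ?_)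
  rcases le_total (2 * Real.pi) |u| with h | h
  · refine (kg_bound_far h).trans ?_
    gcongr
    exact le_max_right _ _
  · have h1 := hB u (abs_le.1 h)
    have h2 : u ^ 2 ≤ (2 * Real.pi) ^ 2 := by
      rw [← sq_abs u]; gcongr
    have h3 : B * (1 + (2 * Real.pi) ^ 2) * (1 + u ^ 2)⁻¹ ≤
        max (B * (1 + (2 * Real.pi) ^ 2)) (32 * Real.pi ^ 2) * (1 + u ^ 2)⁻¹ := by
      gcongr
      exact le_max_left _ _
    refine le_trans ?_ h3
    rw [← div_eq_mul_inv, le_div_iff₀ (by positivity)]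
    have hB0 : 0 ≤ B := (norm_nonneg _).trans h1
    gcongr

lemma kg_neg (u : ℝ) : kg (-u) = kg u := by
  simp [kg]

lemma kg_eq (u : ℝ) : ∫ t in (-1 : ℝ)..1, (kphi t : ℂ) * Complex.exp (Complex.I * u * t) = (kg u : ℂ) := by
  have hk := kphi_continuous
  have hkf := kf_continuous
  have hc : Continuous (fun t : ℝ => (kphi t : ℂ) * Complex.exp (Complex.I * u * t)) := by fun_prop
  rw [← intervalIntegral.integral_add_adjacent_intervals (b := 0) (hc.intervalIntegrable _ _)
    (hc.intervalIntegrable _ _)]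
  have h1 := intervalIntegral.integral_comp_neg (a := (0 : ℝ)) (b := 1)
    (fun t : ℝ => (kphi t : ℂ) * Complex.exp (Complex.I * u * t))
  rw [neg_zero] at h1
  rw [← h1, ← intervalIntegral.integral_add]
  rotate_left
  · exact (hc.comp continuous_neg).intervalIntegrable _ _
  · exact hc.intervalIntegrable _ _
  unfold kg
  rw [← intervalIntegral.integral_const_mul, ← intervalIntegral.integral_ofReal]
  apply intervalIntegral.integral_congr
  intro t ht
  rw [Set.uIcc_of_le zero_le_one] at ht
  have e1 : kphi t = kf t := by
    unfold kphi; rw [abs_of_nonneg ht.1, min_eq_left ht.2]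
  have e2 : kphi (-t) = kf t := by
    unfold kphi; rw [abs_neg, abs_of_nonneg ht.1, min_eq_left ht.2]
  simp only [e1, e2]
  push_cast
  rw [Complex.cos]
  rw [show Complex.I * u * (-t) = -(↑u * ↑t) * Complex.I by ring,
    show Complex.I * u * t = (↑u * ↑t) * Complex.I by ring]
  ring

lemma kphi_zero_of {t : ℝ} (ht : 1 ≤ |t|) : kphi t = 0 := by
  unfold kphi; rw [min_eq_right ht]; simp [kf]

lemma integral_kphi_mul (h : ℝ → ℂ) :
    ∫ t : ℝ, (kphi t : ℂ) * h t = ∫ t in (-1 : ℝ)..1, (kphi t : ℂ) * h t := by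
  rw [intervalIntegral.integral_of_le (by norm_num)]
  symm
  apply setIntegral_eq_integral_of_forall_compl_eq_zero
  intro t ht
  rw [kphi_zero_of]
  · simp
  · by_contra hcon
    push Not at hcon
    exact ht ⟨(abs_lt.1 hcon).1, (abs_lt.1 hcon).2.le⟩

lemma kg_integral : ∫ u, kg u = 6 * Real.pi ^ 3 := by
  have hk := kphi_continuous
  have hkc : Continuous (fun t => (kphi t : ℂ)) := by fun_prop
  have hcs : HasCompactSupport (fun t => (kphi t : ℂ)) := by
    apply HasCompactSupport.of_support_subset_isCompact (isCompact_Icc (a := (-1 : ℝ)) (b := 1))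
    intro t ht
    by_contra hcon
    apply ht
    simp only
    rw [kphi_zero_of, Complex.ofReal_zero]
    by_contra h2
    push Not at h2
    exact hcon ⟨(abs_lt.1 h2).1.le, (abs_lt.1 h2).2.le⟩
  have hF : FourierTransform.fourier (fun t => (kphi t : ℂ)) = fun w : ℝ => (kg (2 * Real.pi * w) : ℂ) := by
    ext w
    rw [Real.fourier_real_eq_integral_exp_smul, ← kg_neg, ← kg_eq, ← integral_kphi_mul]
    congr 1
    ext t
    rw [smul_eq_mul, mul_comm]
    congr 2
    push_cast; ring
  have hFi : Integrable (fun w : ℝ => (kg (2 * Real.pi * w) : ℂ)) :=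
    (kg_integrable.comp_mul_left' (by positivity)).ofReal
  have h1 := hkc.fourierInv_fourier_eq (hkc.integrable_of_hasCompactSupport hcs) (by rw [hF]; exact hFi)
  have h2 := congrFun h1 0
  rw [hF, Real.fourierInv_eq'] at h2
  simp only [inner_zero_right, mul_zero, Complex.ofReal_zero, zero_mul, Complex.exp_zero, one_smul] at h2
  rw [integral_complex_ofReal, Measure.integral_comp_mul_left kg] at h2
  have h3 := Complex.ofReal_injective h2
  have h4 : kphi 0 = 3 * Real.pi ^ 2 := by simp [kphi, kf]
  rw [h4, abs_of_pos (by positivity), smul_eq_mul] at h3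
  have hpi := Real.pi_pos
  field_simp at h3
  linarith

lemma exists_aux : ∃ F : ℂ → ℂ, ContinuousOn F {s | 1 ≤ s.re} ∧ ∀ s : ℂ, 1 < s.re →
    LSeries (fun n => (ArithmeticFunction.vonMangoldt n : ℂ)) s = F s + 1 / (s - 1) := by
  refine ⟨_, ArithmeticFunction.vonMangoldt.continuousOn_LFunctionResidueClassAux (q := 1) 1, ?_⟩
  intro s hs
  have h := ArithmeticFunction.vonMangoldt.eqOn_LFunctionResidueClassAux (q := 1) (a := 1) isUnit_one hs
  rw [h]
  have h2 : ∀ n, ArithmeticFunction.vonMangoldt.residueClass (1 : ZMod 1) n =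
      ArithmeticFunction.vonMangoldt n := by
    intro n
    apply Set.indicator_of_mem
    exact Subsingleton.elim _ _
  simp [h2]

lemma term_eq (T σ t : ℝ) (n : ℕ) :
    LSeries.term (fun n => (ArithmeticFunction.vonMangoldt n : ℂ)) (σ - Complex.I * T * t) n
    = ((ArithmeticFunction.vonMangoldt n * (n : ℝ) ^ (-σ) : ℝ) : ℂ) *
      Complex.exp (Complex.I * T * Real.log n * t) := by
  rcases Nat.eq_zero_or_pos n with rfl | hn
  · simp
  · rw [LSeries.term_of_ne_zero hn.ne', div_eq_mul_inv, ← Complex.cpow_neg, neg_sub, sub_eq_add_neg,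
      Complex.cpow_add _ _ (by exact_mod_cast hn.ne')]
    push_cast
    rw [Complex.ofReal_cpow (by positivity), Complex.cpow_def_of_ne_zero (y := Complex.I * T * t)
      (by exact_mod_cast hn.ne')]
    rw [← Complex.natCast_log]
    push_cast
    rw [show Complex.log n * (Complex.I * T * t) = Complex.I * T * Complex.log n * t by ring]
    ring

lemma sum_identity (T L σ : ℝ) (hσ : 1 < σ) :
    HasSum (fun n : ℕ => ((ArithmeticFunction.vonMangoldt n * (n : ℝ) ^ (-σ) *
        kg (T * (Real.log n - L)) : ℝ) : ℂ))
      (∫ t in (-1 : ℝ)..1, (kphi t : ℂ) * (Complex.exp (-(Complex.I * T * L * t)) *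
        LSeries (fun n => (ArithmeticFunction.vonMangoldt n : ℂ)) (σ - Complex.I * T * t))) := by
  have hk := kphi_continuous
  obtain ⟨B, hB⟩ := (isCompact_Icc (a := (-1 : ℝ)) (b := 1)).exists_bound_of_continuousOn
    kphi_continuous.continuousOn
  have hre : ∀ t : ℝ, ((σ : ℂ) - Complex.I * T * t).re = σ := by intro t; simp
  have key : ∀ n : ℕ, ((ArithmeticFunction.vonMangoldt n * (n : ℝ) ^ (-σ) *
        kg (T * (Real.log n - L)) : ℝ) : ℂ) = ∫ t in (-1 : ℝ)..1, (kphi t : ℂ) *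
        (Complex.exp (-(Complex.I * T * L * t)) *
        LSeries.term (fun n => (ArithmeticFunction.vonMangoldt n : ℂ)) (σ - Complex.I * T * t) n) := by
    intro n
    rw [Complex.ofReal_mul, ← kg_eq, ← intervalIntegral.integral_const_mul]
    congr 1
    ext t
    rw [term_eq]
    rw [show Complex.I * ((T * (Real.log n - L) : ℝ) : ℂ) * t = -(Complex.I * T * L * t) +
      Complex.I * T * Real.log n * t by push_cast; ring, Complex.exp_add]
    ring
  simp_rw [key]
  have hsum : Summable (fun n => B * ‖LSeries.term (fun n => (ArithmeticFunction.vonMangoldt n : ℂ)) σ n‖) :=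
    (ArithmeticFunction.LSeriesSummable_vonMangoldt (s := σ) (by simpa using hσ)).norm.mul_left B
  apply intervalIntegral.hasSum_integral_of_dominated_convergence
    (fun n _ => B * ‖LSeries.term (fun n => (ArithmeticFunction.vonMangoldt n : ℂ)) σ n‖)
  · intro n
    apply Continuous.aestronglyMeasurable
    simp_rw [term_eq]
    fun_prop
  · intro n
    refine ae_of_all _ fun t ht => ?_
    rw [Set.uIoc_of_le (by norm_num)] at ht
    have h1 := hB t ⟨ht.1.le, ht.2⟩
    rw [norm_mul, norm_mul, Complex.norm_real]
    have h2 : ‖Complex.exp (-(Complex.I * T * L * t))‖ = 1 := by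
      rw [Complex.norm_exp]; simp
    rw [h2, one_mul, LSeries.norm_term_eq, LSeries.norm_term_eq, hre, Complex.ofReal_re]
    gcongr
  · exact ae_of_all _ fun t ht => hsum
  · exact intervalIntegrable_const
  · refine ae_of_all _ fun t ht => ?_
    apply HasSum.mul_left
    apply HasSum.mul_left
    exact (ArithmeticFunction.LSeriesSummable_vonMangoldt (by rw [hre]; exact hσ)).hasSum

lemma int_identity (T L σ : ℝ) (hσ : 1 < σ) :
    ((∫ u in Set.Ioi (0 : ℝ), Real.exp (-(σ - 1) * u) * kg (T * (u - L)) : ℝ) : ℂ) =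
      ∫ t in (-1 : ℝ)..1, (kphi t : ℂ) * (Complex.exp (-(Complex.I * T * L * t)) *
        (1 / (σ - Complex.I * T * t - 1))) := by
  have hk := kphi_continuous
  have hfub := integral_integral_swap (μ := volume.restrict (Set.Ioi (0 : ℝ)))
    (ν := volume.restrict (Set.Ioc (-1 : ℝ) 1))
    (f := fun u t => (Real.exp (-(σ - 1) * u) : ℂ) *
      ((kphi t : ℂ) * Complex.exp (Complex.I * ((T * (u - L) : ℝ) : ℂ) * t))) (by
    have h1 : Integrable (fun u => (Real.exp (-(σ - 1) * u) : ℂ)) (volume.restrict (Set.Ioi (0 : ℝ))) :=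
      (exp_neg_integrableOn_Ioi 0 (by linarith)).ofReal
    have h2 : Integrable (fun t => (kphi t : ℂ)) (volume.restrict (Set.Ioc (-1 : ℝ) 1)) := by
      have : IntervalIntegrable (fun t => (kphi t : ℂ)) volume (-1) 1 :=
        Continuous.intervalIntegrable (by fun_prop) _ _
      exact this.1
    refine (h1.mul_prod h2).mono ?_ ?_
    · apply Continuous.aestronglyMeasurable
      simp only [Function.uncurry_def]
      fun_prop
    · refine ae_of_all _ fun z => ?_
      simp only [Function.uncurry_def, norm_mul]
      have h2 : ‖Complex.exp (Complex.I * ((T * (z.1 - L) : ℝ) : ℂ) * z.2)‖ = 1 := by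
        rw [Complex.norm_exp]; simp
      rw [h2, mul_one])
  rw [← integral_complex_ofReal, intervalIntegral.integral_of_le (by norm_num)]
  have hL : ∀ u : ℝ, ((Real.exp (-(σ - 1) * u) * kg (T * (u - L)) : ℝ) : ℂ) =
      ∫ t in Set.Ioc (-1 : ℝ) 1, (Real.exp (-(σ - 1) * u) : ℂ) *
      ((kphi t : ℂ) * Complex.exp (Complex.I * ((T * (u - L) : ℝ) : ℂ) * t)) := by
    intro u
    rw [Complex.ofReal_mul, ← kg_eq, intervalIntegral.integral_of_le (by norm_num), integral_const_mul]
  simp_rw [hL]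
  rw [hfub]
  congr 1
  ext t
  have hre : (-((σ : ℂ) - 1 - Complex.I * T * t)).re < 0 := by simp; linarith
  have h := integral_exp_mul_complex_Ioi hre 0
  have hne : (σ : ℂ) - 1 - Complex.I * T * t ≠ 0 := by
    intro h0; rw [h0] at hre; simp at hre
  calc _ = ∫ u in Set.Ioi (0 : ℝ), ((kphi t : ℂ) * Complex.exp (-(Complex.I * T * L * t))) *
        Complex.exp (-((σ : ℂ) - 1 - Complex.I * T * t) * u) := by
        congr 1
        ext u
        rw [Complex.ofReal_exp, mul_left_comm, ← Complex.exp_add, mul_assoc (kphi t : ℂ), ← Complex.exp_add]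
        congr 2
        push_cast; ring
    _ = _ := by
        rw [integral_const_mul, h]
        rw [show (σ : ℂ) - Complex.I * T * t - 1 = σ - 1 - Complex.I * T * t by ring]
        rw [Complex.ofReal_zero, mul_zero, Complex.exp_zero, neg_div_neg_eq, mul_assoc]

lemma key_ineq (F : ℂ → ℂ) (hF : ContinuousOn F {s | 1 ≤ s.re})
    (hFe : ∀ s : ℂ, 1 < s.re →
      LSeries (fun n => (ArithmeticFunction.vonMangoldt n : ℂ)) s = F s + 1 / (s - 1))
    (T L : ℝ) (hT : 0 < T) (hno : ∀ n : ℕ, IsPrimePow n → kg (T * (Real.log n - L)) ≤ 0) :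
    (∫ u in Set.Ioi (0 : ℝ), kg (T * (u - L))) + (∫ t in (-1 : ℝ)..1, (kphi t : ℂ) *
      (Complex.exp (-(Complex.I * T * L * t)) * F (1 - Complex.I * T * t))).re ≤ 0 := by
  have hk := kphi_continuous
  -- continuous extension
  have hH : Continuous (fun z : ℝ × ℝ => F (((max z.1 1 : ℝ) : ℂ) - Complex.I * T * z.2)) := by
    apply hF.comp_continuous
    · fun_prop
    · intro z; simp
  have hJ : Continuous (fun σ : ℝ => ∫ t in (-1 : ℝ)..1, (kphi t : ℂ) *
      (Complex.exp (-(Complex.I * T * L * t)) * F (((max σ 1 : ℝ) : ℂ) - Complex.I * T * t))) := by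
    apply intervalIntegral.continuous_parametric_intervalIntegral_of_continuous'
    simp only [Function.uncurry_def]
    exact Continuous.mul (by fun_prop) (Continuous.mul (by fun_prop) hH)
  have hkgi : Integrable (fun u => kg (T * (u - L))) :=
    (kg_integrable.comp_mul_left' hT.ne').comp_sub_right L
  have hlim1 : Tendsto (fun σ : ℝ => ∫ u in Set.Ioi (0 : ℝ), Real.exp (-(σ - 1) * u) * kg (T * (u - L)))
      (𝓝[>] 1) (𝓝 (∫ u in Set.Ioi (0 : ℝ), kg (T * (u - L)))) := by
    apply tendsto_integral_filter_of_dominated_convergence (fun u => |kg (T * (u - L))|)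
    · have := kg_continuous
      exact Eventually.of_forall fun σ => Continuous.aestronglyMeasurable (by fun_prop)
    · filter_upwards [self_mem_nhdsWithin] with σ hσ
      refine (ae_restrict_iff' measurableSet_Ioi).2 (ae_of_all _ fun u hu => ?_)
      rw [norm_mul, Real.norm_eq_abs, Real.norm_eq_abs, Real.abs_exp]
      have : Real.exp (-(σ - 1) * u) ≤ 1 := by
        rw [Real.exp_le_one_iff]
        have h1 : 0 < σ - 1 := sub_pos.2 hσ
        have h2 : 0 < u := hu
        nlinarith
      exact mul_le_of_le_one_left (abs_nonneg _) this
    · exact hkgi.abs.integrableOn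
    · refine ae_of_all _ fun u => ?_
      have : Continuous (fun σ : ℝ => Real.exp (-(σ - 1) * u) * kg (T * (u - L))) := by fun_prop
      have h2 := (this.tendsto 1).mono_left (nhdsWithin_le_nhds (s := Set.Ioi 1))
      simpa using h2
  have hlim2 := (Complex.continuous_re.comp hJ).tendsto 1 |>.mono_left (nhdsWithin_le_nhds (s := Set.Ioi 1))
  have hlim := hlim1.add hlim2
  simp only [Function.comp, max_self, Complex.ofReal_one] at hlim
  refine le_of_tendsto hlim ?_
  filter_upwards [self_mem_nhdsWithin] with σ hσ
  have hσ1 : 1 < σ := hσ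
  have hs := sum_identity T L σ hσ1
  have hi := int_identity T L σ hσ1
  have hre : ∀ t : ℝ, ((σ : ℂ) - Complex.I * T * t).re = σ := by intro t; simp
  have hsplit : (∫ t in (-1 : ℝ)..1, (kphi t : ℂ) * (Complex.exp (-(Complex.I * T * L * t)) *
        LSeries (fun n => (ArithmeticFunction.vonMangoldt n : ℂ)) (σ - Complex.I * T * t))) =
      (∫ t in (-1 : ℝ)..1, (kphi t : ℂ) *
      (Complex.exp (-(Complex.I * T * L * t)) * F (((max σ 1 : ℝ) : ℂ) - Complex.I * T * t))) +
      ∫ t in (-1 : ℝ)..1, (kphi t : ℂ) * (Complex.exp (-(Complex.I * T * L * t)) *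
        (1 / (σ - Complex.I * T * t - 1))) := by
    rw [← intervalIntegral.integral_add]
    · congr 1
      ext t
      rw [hFe _ (by rw [hre]; exact hσ1), max_eq_left hσ1.le]
      ring
    · apply Continuous.intervalIntegrable
      have := hH.comp (show Continuous (fun t : ℝ => (σ, t)) by fun_prop)
      exact Continuous.mul (by fun_prop) (Continuous.mul (by fun_prop) this)
    · apply Continuous.intervalIntegrable
      have : ∀ t : ℝ, (σ : ℂ) - Complex.I * T * t - 1 ≠ 0 := by
        intro t h0
        have := congrArg Complex.re h0
        simp at this
        linarith
      have hc : Continuous (fun t : ℝ => 1 / ((σ : ℂ) - Complex.I * T * t - 1)) :=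
        continuous_const.div (by fun_prop) this
      fun_prop
  rw [hsplit, ← hi] at hs
  have hs2 := Complex.hasSum_re hs
  simp only [Complex.ofReal_re, Complex.add_re] at hs2
  rw [add_comm]
  refine hasSum_le (fun n => ?_) hs2 hasSum_zero
  by_cases hn : IsPrimePow n
  · exact mul_nonpos_of_nonneg_of_nonpos
      (mul_nonneg ArithmeticFunction.vonMangoldt_nonneg (by positivity)) (hno n hn)
  · have : ArithmeticFunction.vonMangoldt n = 0 := by
      by_contra h
      exact hn (ArithmeticFunction.vonMangoldt_ne_zero_iff.1 h)
    simp [this]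

lemma exists_primePow_near (η : ℝ) (hη : 0 < η) :
    ∀ᶠ L : ℝ in atTop, ∃ n : ℕ, IsPrimePow n ∧ |Real.log n - L| < η := by
  obtain ⟨F, hF, hFe⟩ := exists_aux
  have hk := kphi_continuous
  obtain ⟨T, hTdef⟩ : ∃ T, T = 2 * Real.pi / η := ⟨_, rfl⟩
  have hT : 0 < T := by rw [hTdef]; positivity
  have hpos : 0 < ∫ u, kg (T * u) := by
    rw [Measure.integral_comp_mul_left kg, kg_integral, smul_eq_mul]
    have := Real.pi_pos
    positivity
  have hlim1 : Tendsto (fun L : ℝ => ∫ u in Set.Ioi (0 : ℝ), kg (T * (u - L))) atTop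
      (𝓝 (∫ u, kg (T * u))) := by
    have h0 : ∀ L : ℝ, ∫ u in Set.Ioi (0 : ℝ), kg (T * (u - L)) = ∫ u in Set.Ioi (-L), kg (T * u) := by
      intro L
      have := (measurePreserving_sub_right volume L).setIntegral_preimage_emb
        (measurableEmbedding_subRight L) (fun u => kg (T * u)) (Set.Ioi (-L))
      rw [← this]
      congr 2
      ext u; simp
    simp_rw [h0]
    have hi : Integrable (fun u => kg (T * u)) := kg_integrable.comp_mul_left' hT.ne'
    have hU : (⋃ L : ℝ, Set.Ioi (-L)) = Set.univ := by
      ext u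
      simp only [Set.mem_iUnion, Set.mem_Ioi, Set.mem_univ, iff_true]
      exact ⟨-u + 1, by linarith⟩
    have := tendsto_setIntegral_of_monotone (μ := volume) (f := fun u => kg (T * u))
      (s := fun L : ℝ => Set.Ioi (-L)) (fun _ => measurableSet_Ioi)
      (fun a b hab => Set.Ioi_subset_Ioi (by linarith)) hi.integrableOn
    rwa [hU, setIntegral_univ] at this
  have hlim2 : Tendsto (fun L : ℝ => ∫ t in (-1 : ℝ)..1, (kphi t : ℂ) *
      (Complex.exp (-(Complex.I * T * L * t)) * F (1 - Complex.I * T * t))) atTop (𝓝 0) := by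
    have h1 := Real.tendsto_integral_exp_smul_cocompact
      (fun t : ℝ => (kphi t : ℂ) * F (1 - Complex.I * T * t))
    have h2 : Tendsto (fun L : ℝ => L * (T / (2 * Real.pi))) atTop (cocompact ℝ) := by
      apply Tendsto.mono_right _ atTop_le_cocompact
      exact tendsto_id.atTop_mul_const (by positivity)
    refine (h1.comp h2).congr fun L => ?_
    rw [← integral_kphi_mul]
    simp only [Function.comp]
    congr 1
    ext t
    rw [Circle.smul_def, Real.fourierChar_apply, smul_eq_mul, mul_left_comm]
    congr 3
    push_cast
    have : (Real.pi : ℂ) ≠ 0 := by exact_mod_cast Real.pi_ne_zero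
    field_simp
  have hlim := hlim1.add ((Complex.continuous_re.tendsto 0).comp hlim2)
  simp only [Complex.zero_re, add_zero] at hlim
  filter_upwards [hlim.eventually (lt_mem_nhds hpos)] with L hL
  by_contra hcon
  push Not at hcon
  have := key_ineq F hF hFe T L hT (fun n hn => by
    apply kg_nonpos
    rw [abs_mul, abs_of_pos hT, hTdef, div_mul_eq_mul_div, le_div_iff₀ hη]
    have := hcon n hn
    gcongr)
  simp only [Function.comp] at hL
  linarith

/-- Lower bound matching the upper bound asymptotically: for every `ε > 0` and all
sufficiently large `r` there is a distinct difference configuration with pairwise Manhattan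
distance at most `r` containing at least `(1/√2 − ε)·r` dots. -/
theorem stmt_19 (ε : ℝ) (hε : 0 < ε) :
    ∃ r₀ : ℕ, 0 < r₀ ∧ ∀ r : ℕ, r₀ ≤ r →
      ∃ D : Finset (ℤ × ℤ), IsDDC (D : Set (ℤ × ℤ)) ∧
        (∀ p ∈ D, ∀ q ∈ D, mdist p q ≤ (r : ℤ)) ∧
        (1 / Real.sqrt 2 - ε) * (r : ℝ) ≤ (D.card : ℝ) := by
  have hs2 : 0 < Real.sqrt 2 := by positivity
  have hsq : Real.sqrt 2 * Real.sqrt 2 = 2 := Real.mul_self_sqrt (by norm_num)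
  have hs1 : 1 ≤ Real.sqrt 2 := by
    rw [Real.one_le_sqrt]; norm_num
  obtain ⟨η, hη⟩ : ∃ η, η = ε / 4 := ⟨_, rfl⟩
  have hη0 : 0 < η := by rw [hη]; positivity
  have hlim : Tendsto (fun r : ℕ => Real.log (((r : ℝ) + 2) / Real.sqrt 2) + η) atTop atTop := by
    apply tendsto_atTop_add_const_right
    apply Real.tendsto_log_atTop.comp
    apply Tendsto.atTop_div_const hs2
    exact tendsto_atTop_add_const_right _ _ tendsto_natCast_atTop_atTop
  have hev := hlim.eventually (exists_primePow_near η hη0)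
  obtain ⟨R, hR⟩ := eventually_atTop.1 hev
  obtain ⟨M, hM⟩ := exists_nat_gt (4 / ε)
  refine ⟨max R M + 1, by omega, fun r hr => ?_⟩
  obtain ⟨q, hq, hqL⟩ := hR r (by omega)
  have hq0 : (0 : ℝ) < q := by exact_mod_cast hq.pos
  have hr2 : (0 : ℝ) < (r : ℝ) + 2 := by positivity
  have hx : 0 < ((r : ℝ) + 2) / Real.sqrt 2 := by positivity
  rw [abs_lt] at hqL
  have hlow : ((r : ℝ) + 2) / Real.sqrt 2 < q := by
    rw [← Real.log_lt_log_iff hx hq0]; linarith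
  have hup : (q : ℝ) < ((r : ℝ) + 2) / Real.sqrt 2 * Real.exp (2 * η) := by
    rw [← Real.log_lt_log_iff hq0 (by positivity), Real.log_mul hx.ne' (Real.exp_pos _).ne',
      Real.log_exp]
    linarith
  have hrq : (r + 2) ^ 2 ≤ 2 * q ^ 2 := by
    rw [div_lt_iff₀ hs2] at hlow
    have : ((r : ℝ) + 2) ^ 2 ≤ 2 * q ^ 2 := by
      calc ((r : ℝ) + 2) ^ 2 ≤ (q * Real.sqrt 2) ^ 2 := by gcongr
        _ = 2 * (q : ℝ) ^ 2 := by rw [mul_pow, Real.sq_sqrt (by norm_num)]; ring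
    exact_mod_cast this
  obtain ⟨D, hD1, hD2, hD3⟩ := fold q r hq hrq
  refine ⟨D, hD1, hD2, ?_⟩
  have hD3' : (r : ℝ) ^ 2 ≤ 2 * (D.card * q) := by exact_mod_cast hD3
  have hr1 : (M : ℝ) ≤ r := by
    have : M ≤ r := by omega
    exact_mod_cast this
  have hr0 : (0 : ℝ) < r := by
    have : 0 < r := by omega
    exact_mod_cast this
  rcases le_or_gt (1 / Real.sqrt 2 - ε) 0 with hneg | hpos
  · exact (mul_nonpos_of_nonpos_of_nonneg hneg hr0.le).trans (by positivity)
  -- the main estimate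
  have hexp : 1 - 2 * η ≤ Real.exp (-(2 * η)) := by
    have := Real.add_one_le_exp (-(2 * η)); linarith
  have hq2 : (q : ℝ) * Real.sqrt 2 * Real.exp (-(2 * η)) ≤ r + 2 := by
    have h1 : (q : ℝ) * (Real.sqrt 2 * Real.exp (-(2 * η))) ≤
        ((r : ℝ) + 2) / Real.sqrt 2 * Real.exp (2 * η) * (Real.sqrt 2 * Real.exp (-(2 * η))) := by
      gcongr
    have h2 : ((r : ℝ) + 2) / Real.sqrt 2 * Real.exp (2 * η) * (Real.sqrt 2 * Real.exp (-(2 * η)))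
        = r + 2 := by
      rw [Real.exp_neg]; field_simp
    linarith
  have hq3 : (q : ℝ) * (Real.sqrt 2 * (1 - 2 * η)) ≤ r + 2 := by
    refine le_trans ?_ hq2
    rw [mul_assoc]
    gcongr
  have h4 : 4 < ε * r := by
    rw [div_lt_iff₀ hε] at hM
    nlinarith
  have hpos' : 0 < 1 - ε * Real.sqrt 2 := by
    have := mul_pos hpos hs2
    rw [sub_mul, one_div, inv_mul_cancel₀ hs2.ne'] at this
    exact this
  have h5 : (r + 2) * (1 - ε * Real.sqrt 2) ≤ r * (1 - 2 * η) := by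
    rw [hη]
    have : ε * r * 1 ≤ ε * r * Real.sqrt 2 := by gcongr
    have : 0 ≤ ε * Real.sqrt 2 := by positivity
    nlinarith
  have h6 : q * (Real.sqrt 2 * (1 - ε * Real.sqrt 2)) ≤ r := by
    have h21 : 0 < 1 - 2 * η := by rw [hη]; nlinarith
    have : (q * (Real.sqrt 2 * (1 - ε * Real.sqrt 2))) * (1 - 2 * η) ≤ r * (1 - 2 * η) := by
      refine le_trans ?_ h5
      nlinarith [mul_le_mul_of_nonneg_right hq3 hpos'.le]
    exact le_of_mul_le_mul_right this h21
  have h7 : (1 / Real.sqrt 2 - ε) * r * (2 * q) ≤ D.card * (2 * q) := by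
    have e : (1 / Real.sqrt 2 - ε) * r * (2 * q) = (q * (Real.sqrt 2 * (1 - ε * Real.sqrt 2))) * r := by
      field_simp
      rw [Real.sq_sqrt (by norm_num)]
      ring
    rw [e]
    nlinarith [mul_le_mul_of_nonneg_right h6 hr0.le]
  exact le_of_mul_le_mul_right h7 (by positivity)
end
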